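/- If n > 6^d φ, then there exists a coupling of V with a random variable V' having the V size-biased distribution such that |V' − V| ≤ φ almost surely and Var( E[V' − V | V] ) ≤ η_V(n,ρ)/n. -/

import Mathlib

open MeasureTheory ProbabilityTheory Filter Set Metric
open scoped ENNReal NNReal BigOperators Topology Classical

noncomputable section

/-- Side length `n^(1/d)` of the cube `C_n` of volume `n` in dimension `d`. -/
def sideLen (d n : ℕ) : ℝ := (n : ℝ) ^ ((d : ℝ)⁻¹)

/-- The cube `C_n = [0, L)^d`. -/
def box (d : ℕ) (L : ℝ) : Set (Fin d → ℝ) := Set.univ.pi fun _ => Set.Ico (0 : ℝ) L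

/-- The Euclidean toroidal distance on the cube `[0, L)^d`. -/
def torDist {d : ℕ} (L : ℝ) (x y : Fin d → ℝ) : ℝ :=
  Real.sqrt (∑ i, (⨅ k : ℤ, |x i - y i - k * L|) ^ 2)

/-- The toroidal ball `B_r(x) = {y ∈ C_n : D(x,y) ≤ r}`. -/
def torBall {d : ℕ} (L : ℝ) (x : Fin d → ℝ) (r : ℝ) : Set (Fin d → ℝ) :=
  {y ∈ box d L | torDist L x y ≤ r}

/-- Addition (translation) in the torus `[0, L)^d`. -/
def torAdd {d : ℕ} (L : ℝ) (y x : Fin d → ℝ) : Fin d → ℝ :=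
  fun i => L * Int.fract ((y i + x i) / L)

/-- The uniform probability measure on the cube `[0, L)^d`. -/
def uniformBox (d : ℕ) (L : ℝ) : Measure (Fin d → ℝ) :=
  ((L.toNNReal ^ d)⁻¹ : ℝ≥0) • volume.restrict (box d L)

/-- The joint law of `n` independent points uniformly distributed on the cube `C_n`
of volume `n`; a point configuration is `ω : Fin n → (Fin d → ℝ)`, with `U_i = ω i`. -/
def binppLaw (d n : ℕ) : Measure (Fin n → Fin d → ℝ) :=
  Measure.pi fun _ => uniformBox d (sideLen d n)

/-- The total covered volume `V` of the union of toroidal balls of radius `ρ`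
centered at the `n` points. -/
def coveredVol (d n : ℕ) (ρ : ℝ) (ω : Fin n → Fin d → ℝ) : ℝ :=
  (volume (⋃ i, torBall (sideLen d n) (ω i) ρ)).toReal

/-- The number `S` of isolated points: indices `i` with `𝒰_n ∩ B_ρ(U_i) = {U_i}`. -/
def isolCount (d n : ℕ) (ρ : ℝ) (ω : Fin n → Fin d → ℝ) : ℝ :=
  ∑ i, if Set.range ω ∩ torBall (sideLen d n) (ω i) ρ = {ω i} then 1 else 0

/-- `π_d`: the volume of the unit ball in `ℝ^d`. -/
def unitBallVol (d : ℕ) : ℝ :=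
  (volume (Metric.closedBall (0 : EuclideanSpace ℝ (Fin d)) 1)).toReal

/-- `φ = π_d ρ^d`. -/
def phi (d : ℕ) (ρ : ℝ) : ℝ := unitBallVol d * ρ ^ d

/-- The standard normal cumulative distribution function. -/
def stdGaussCDF (t : ℝ) : ℝ := (gaussianReal 0 1 (Set.Iic t)).toReal

/-- The Kolmogorov distance `D_X` between the law of the standardized version of `X`
and the standard normal. -/
def kolDist {Ω : Type*} [MeasurableSpace Ω] (P : Measure Ω) (X : Ω → ℝ) : ℝ :=
  ⨆ t : ℝ,
    |(P {ω | (X ω - ∫ x, X x ∂P) / Real.sqrt (variance X P) ≤ t}).toReal - stdGaussCDF t|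

/-- A fixed unit vector in `ℝ^d` (junk value `0` if `d = 0`). -/
def unitVec (d : ℕ) : EuclideanSpace ℝ (Fin d) :=
  if h : 0 < d then EuclideanSpace.single (⟨0, h⟩ : Fin d) 1 else 0

/-- `ω_d(r)`: the volume of the union of two unit balls in `ℝ^d` whose centers are
at distance `r` apart. -/
def omegaVol (d : ℕ) (r : ℝ) : ℝ :=
  (volume (Metric.closedBall (0 : EuclideanSpace ℝ (Fin d)) 1 ∪
      Metric.closedBall (r • unitVec d) 1)).toReal

/-- The integral `J_{r,d}(ρ) = d π_d ∫_0^r exp(-ρ^d ω_d(t)) t^{d-1} dt`. -/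
def Jint (r : ℝ) (d : ℕ) (ρ : ℝ) : ℝ :=
  d * unitBallVol d * ∫ t in (0:ℝ)..r, Real.exp (-(ρ ^ d * omegaVol d t)) * t ^ (d - 1)

/-- The limiting variance density `g_V(ρ)`. -/
def gV (d : ℕ) (ρ : ℝ) : ℝ :=
  ρ ^ d * Jint 2 d ρ - (2 ^ d * phi d ρ + phi d ρ ^ 2) * Real.exp (-(2 * phi d ρ))

/-- The limiting variance density `g_S(ρ)`. -/
def gS (d : ℕ) (ρ : ℝ) : ℝ :=
  Real.exp (-phi d ρ) - (1 + (2 ^ d - 2) * phi d ρ + phi d ρ ^ 2) * Real.exp (-(2 * phi d ρ))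
    + ρ ^ d * (Jint 2 d ρ - Jint 1 d ρ)

/-- `κ_d`: the maximum number of closed unit balls in `ℝ^d` that can be packed so that
they all intersect a closed unit ball at the origin but are pairwise disjoint. -/
def kappa (d : ℕ) : ℕ :=
  sSup {k : ℕ | ∃ c : Fin k → EuclideanSpace ℝ (Fin d),
    (∀ i, (Metric.closedBall (c i) 1 ∩ Metric.closedBall 0 1).Nonempty) ∧
    Pairwise fun i j => Disjoint (Metric.closedBall (c i) 1) (Metric.closedBall (c j) 1)}

/-- `η_V(n, ρ)`. -/
def etaV (d n : ℕ) (ρ : ℝ) : ℝ :=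
  2 * phi d ρ ^ 2 * ((3 ^ d + 1) * phi d ρ + 1) ^ 2 *
      (1 + (2 ^ d + 1) * 6 ^ d * phi d ρ +
        ((2 * n - 6 ^ d * phi d ρ) / (n - 6 ^ d * phi d ρ)) * 6 ^ (2 * d) * phi d ρ ^ 2) +
    2 * phi d ρ ^ 4 *
      (3 * (4 ^ d + 2 ^ d) * phi d ρ +
        3 * 4 ^ d * phi d ρ ^ 2 * ((2 * n - 3 * 2 ^ d * phi d ρ) / (n - 3 * 2 ^ d * phi d ρ)) +
        4 + 2 / n)

/-- `η_S(n, ρ)`. -/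
def etaS (d n : ℕ) (ρ : ℝ) : ℝ :=
  2 * (1 + 2 * (kappa d : ℝ)) ^ 2 *
      (1 + (2 ^ d + 1) * 3 ^ d * phi d ρ +
        ((2 * n - 3 ^ d * phi d ρ) / (n - 3 ^ d * phi d ρ)) * 9 ^ d * phi d ρ ^ 2) +
    (((1 : ℝ) + kappa d) ^ 2 / 2) *
      ((2 ^ d + 2 * 3 ^ d + 3) * phi d ρ +
        (2 ^ (d + 1) + 1) *
          ((2 * n - (2 ^ (d + 1) + 1) * phi d ρ) / (n - (2 ^ (d + 1) + 1) * phi d ρ)) *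
          phi d ρ ^ 2 +
        (4 * n - 2) / (n - 1))

/-!
Toroidal balls with uniform centres form a germ–grain model in which all grains and all reflected
grains `{y | x ∈ B y}` have the same measure `p`. To size-bias the covered measure, choose a germ
`i` uniformly and an independent incident pair `(y, x)`, so that `x` is uniform and `y` is uniform
among the germs whose grain contains `x`. With `N` the number of germs other than `i` covering `x`,
move germ `i` to `y` with probability `q N`, and otherwise do nothing. The law of the new
configuration has, for fixed `x`, a density depending only on the number of germs covering `x`; a
linear recursion determines `q` so that this density is constant when that number is positive and
`0` when it is `0`. Averaging over `x` gives a density proportional to the covered measure.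

Moving one germ changes the covered measure by at most `p`. Given the configuration, the mean change
is an average over `i` of terms in which another germ `j` matters only if it covers `x` or if its
grain meets the grain of the germ before or after the move. Comparing with the average that ignores
germ `j`, the Efron–Stein inequality bounds the variance of the conditional mean.
-/

section Torus

variable {d : ℕ} {L : ℝ}

lemma iInf_abs_sub_int_mul_eq_norm (hL : 0 < L) (a : ℝ) :
    ⨅ k : ℤ, |a - k * L| = ‖(a : AddCircle L)‖ := by
  have habs (k : ℤ) : |a - k * L| = |L⁻¹ * a - k| * L := by
    rw [← abs_of_pos hL, ← abs_mul, abs_of_pos hL]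
    field_simp
  rw [AddCircle.norm_eq]
  have hbdd : BddBelow (range fun k : ℤ ↦ |a - k * L|) :=
    ⟨0, by rintro _ ⟨k, rfl⟩; exact abs_nonneg _⟩
  refine le_antisymm (ciInf_le hbdd _) (le_ciInf fun k ↦ ?_)
  rw [habs, habs]
  exact mul_le_mul_of_nonneg_right (round_le _ k) hL.le

/-- The quotient map from `ℝ^d` onto the torus `(ℝ / Lℤ)^d`. -/
def toTorus (L : ℝ) (x : Fin d → ℝ) : Fin d → AddCircle L := fun i ↦ x i

lemma toTorus_sub (x y : Fin d → ℝ) : toTorus L (x - y) = toTorus L x - toTorus L y := by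
  ext i; simp [toTorus]

lemma measurable_toTorus : Measurable (toTorus L : (Fin d → ℝ) → _) :=
  measurable_pi_lambda _ fun i ↦ AddCircle.measurable_mk'.comp (measurable_pi_apply i)

lemma torDist_eq_norm (hL : 0 < L) (x y : Fin d → ℝ) :
    torDist L x y = ‖WithLp.toLp 2 (toTorus L x - toTorus L y)‖ := by
  simp only [torDist, iInf_abs_sub_int_mul_eq_norm hL, PiLp.norm_eq_of_L2, ← toTorus_sub, toTorus,
    Pi.sub_apply]

lemma torDist_comm (hL : 0 < L) (x y : Fin d → ℝ) : torDist L x y = torDist L y x := by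
  rw [torDist_eq_norm hL, torDist_eq_norm hL, ← neg_sub, WithLp.toLp_neg, norm_neg]

lemma measurable_torDist :
    Measurable fun z : (Fin d → ℝ) × (Fin d → ℝ) ↦ torDist L z.1 z.2 := by
  unfold torDist
  fun_prop

lemma measurePreserving_toTorus [Fact (0 < L)] (a : ℝ) :
    MeasurePreserving (toTorus L)
      (volume.restrict (univ.pi fun _ : Fin d ↦ Ioc a (a + L))) volume := by
  rw [volume_pi, Measure.restrict_pi_pi]
  exact measurePreserving_pi _ _ fun _ ↦ AddCircle.measurePreserving_mk L a

lemma restrict_box_eq : (volume.restrict (box d L) : Measure (Fin d → ℝ)) =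
    volume.restrict (univ.pi fun _ ↦ Ioc 0 (0 + L)) := by
  rw [box, volume_pi, Measure.restrict_pi_pi, Measure.restrict_pi_pi, zero_add]
  simp_rw [restrict_Ico_eq_restrict_Ioc]

/-- The closed Euclidean ball of radius `r` around the origin of the torus `(ℝ / Lℤ)^d`. -/
def torusBall (d : ℕ) (L r : ℝ) : Set (Fin d → AddCircle L) := {t | ‖WithLp.toLp 2 t‖ ≤ r}

lemma isClosed_torusBall (r : ℝ) : IsClosed (torusBall d L r) :=
  isClosed_le (by fun_prop) continuous_const

lemma torBall_eq (hL : 0 < L) (x : Fin d → ℝ) (r : ℝ) :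
    torBall L x r = toTorus L ⁻¹' ((fun t ↦ t - toTorus L x) ⁻¹' torusBall d L r) ∩ box d L := by
  ext y
  simp [torBall, torusBall, torDist_comm hL x, torDist_eq_norm hL, and_comm]

lemma volume_torBall [Fact (0 < L)] (x : Fin d → ℝ) (r : ℝ) :
    volume (torBall L x r) = volume (torusBall d L r) := by
  have hball : MeasurableSet (torusBall d L r) := (isClosed_torusBall r).measurableSet
  have hpre : MeasurableSet ((fun t ↦ t - toTorus L x) ⁻¹' torusBall d L r) :=
    (measurable_id.sub_const _) hball
  rw [torBall_eq Fact.out, ← Measure.restrict_apply (measurable_toTorus hpre), restrict_box_eq,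
    (measurePreserving_toTorus 0).measure_preimage hpre.nullMeasurableSet]
  exact (measurePreserving_sub_right volume (toTorus L x)).measure_preimage hball.nullMeasurableSet

lemma volume_torusBall_pos [Fact (0 < L)] {r : ℝ} (hr : 0 < r) : 0 < volume (torusBall d L r) := by
  have hopen : IsOpen {t : Fin d → AddCircle L | ‖WithLp.toLp 2 t‖ < r} :=
    isOpen_lt (by fun_prop) continuous_const
  refine (hopen.measure_pos volume ⟨0, by simpa using hr⟩).trans_le (measure_mono fun t ht ↦ ?_)
  exact le_of_lt (show ‖WithLp.toLp 2 t‖ < r from ht)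

lemma volume_euclideanBall (d : ℕ) {r : ℝ} (hr : 0 ≤ r) :
    volume {x : Fin d → ℝ | ‖WithLp.toLp 2 x‖ ≤ r} = ENNReal.ofReal (phi d r) := by
  have hpre : {x : Fin d → ℝ | ‖WithLp.toLp 2 x‖ ≤ r} =
      WithLp.toLp 2 ⁻¹' closedBall (0 : EuclideanSpace ℝ (Fin d)) r := by
    ext x; simp
  rw [hpre, (PiLp.volume_preserving_toLp (Fin d)).measure_preimage
    measurableSet_closedBall.nullMeasurableSet, Measure.addHaar_closedBall _ _ hr, phi, unitBallVol,
    Measure.addHaar_unitClosedBall_eq_addHaar_unitBall, mul_comm,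
    ENNReal.ofReal_mul (by positivity), ENNReal.ofReal_toReal measure_ball_lt_top.ne,
    finrank_euclideanSpace_fin]

/- On the fundamental domain `(-L/2, L/2]^d` the torus norm is the Euclidean norm. -/
lemma volume_torusBall_le [Fact (0 < L)] {r : ℝ} (hr : 0 ≤ r) :
    volume (torusBall d L r) ≤ ENNReal.ofReal (phi d r) := by
  have hL : 0 < L := Fact.out
  have hball : MeasurableSet (torusBall d L r) := (isClosed_torusBall r).measurableSet
  rw [← volume_euclideanBall d hr, ← (measurePreserving_toTorus (-(L / 2))).measure_preimage
    hball.nullMeasurableSet, Measure.restrict_apply (measurable_toTorus hball)]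
  refine measure_mono fun x ⟨hx, hx'⟩ ↦ ?_
  have hnorm (i : Fin d) : ‖(x i : AddCircle L)‖ = ‖x i‖ := by
    have := hx' i (mem_univ i)
    rw [Real.norm_eq_abs, AddCircle.norm_coe_eq_abs_iff _ hL.ne', abs_of_pos hL, abs_le]
    constructor <;> linarith [this.1, this.2]
  simpa [torusBall, toTorus, PiLp.norm_eq_of_L2, hnorm] using hx

lemma volume_box (hL : 0 ≤ L) : volume (box d L) = ENNReal.ofReal (L ^ d) := by
  simp [box, Real.volume_pi_Ico, ENNReal.ofReal_pow hL]

end Torus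

lemma integral_comp_measurePreserving {α β : Type*} [MeasurableSpace α] [MeasurableSpace β]
    {μ : Measure α} {ν : Measure β} {f : α → β} (hf : MeasurePreserving f μ ν) {g : β → ℝ}
    (hg : AEStronglyMeasurable g ν) : ∫ a, g (f a) ∂μ = ∫ b, g b ∂ν := by
  rw [← hf.map_eq, integral_map hf.aemeasurable (hf.map_eq ▸ hg)]

lemma lintegral_uniformOn_univ {ι : Type*} [Fintype ι] [MeasurableSpace ι]
    [MeasurableSingletonClass ι] (f : ι → ℝ≥0∞) :
    ∫⁻ i, f i ∂uniformOn univ = (Fintype.card ι : ℝ≥0∞)⁻¹ * ∑ i, f i := by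
  rw [uniformOn, ProbabilityTheory.cond, Measure.restrict_univ, lintegral_smul_measure,
    lintegral_count, tsum_fintype, Measure.count_apply_finite _ finite_univ]
  simp

lemma integral_uniformOn_univ {ι : Type*} [Fintype ι] [MeasurableSpace ι]
    [MeasurableSingletonClass ι] (f : ι → ℝ) :
    ∫ i, f i ∂uniformOn univ = (Fintype.card ι : ℝ)⁻¹ * ∑ i, f i := by
  rw [uniformOn, ProbabilityTheory.cond, Measure.restrict_univ, integral_smul_measure,
    integral_count, Measure.count_apply_finite _ finite_univ]
  simp

lemma lintegral_unitInterval_ite_le (c : unitInterval) (a b : ℝ≥0∞) :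
    ∫⁻ t : unitInterval, (if t ≤ c then a else b) =
      ENNReal.ofReal c * a + ENNReal.ofReal (1 - c) * b := by
  have hsplit (t : unitInterval) : (if t ≤ c then a else b) =
      (Iic c).indicator (fun _ ↦ a) t + (Ioi c).indicator (fun _ ↦ b) t := by
    by_cases ht : t ≤ c <;> simp [ht, not_le.1]
  simp only [hsplit]
  rw [lintegral_add_left (measurable_const.indicator measurableSet_Iic),
    lintegral_indicator_const measurableSet_Iic, lintegral_indicator_const measurableSet_Ioi,
    unitInterval.volume_Iic, unitInterval.volume_Ioi, mul_comm a, mul_comm b]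

lemma integral_unitInterval_ite_le (c : unitInterval) (a : ℝ) :
    ∫ t : unitInterval, (if t ≤ c then a else 0) = c * a := by
  have hindicator : (fun t : unitInterval ↦ if t ≤ c then a else 0) =
      (Iic c).indicator fun _ ↦ a := rfl
  rw [hindicator, integral_indicator_const _ measurableSet_Iic, measureReal_def,
    unitInterval.volume_Iic, ENNReal.toReal_ofReal c.2.1, smul_eq_mul]

/- Total mass one forces `c` to be the inverse of the mean of `W`. -/
lemma integral_mul_eq_of_map_eq_withDensity {Ω α : Type*} [MeasurableSpace Ω] [MeasurableSpace α]
    {Q : Measure Ω} [IsProbabilityMeasure Q] {P : Measure α} {Z : Ω → α} (hZ : Measurable Z)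
    {c : ℝ≥0∞} (hc : c ≠ ∞) {W : α → ℝ} (hW : Measurable W) (hW₀ : 0 ≤ W)
    (hmap : Q.map Z = P.withDensity fun a ↦ c * ENNReal.ofReal (W a)) {h : α → ℝ}
    (hh : Measurable h) :
    ∫ a, W a * h a ∂P = (∫ a, W a ∂P) * ∫ w, h (Z w) ∂Q := by
  have hbias {g : α → ℝ} (hg : Measurable g) : ∫ w, g (Z w) ∂Q = c.toReal * ∫ a, W a * g a ∂P := by
    rw [← integral_map hZ.aemeasurable hg.aestronglyMeasurable, hmap,
      integral_withDensity_eq_integral_toReal_smul (by fun_prop)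
        (ae_of_all _ fun a ↦ ENNReal.mul_lt_top hc.lt_top ENNReal.ofReal_lt_top),
      ← integral_const_mul]
    refine integral_congr_ae (ae_of_all _ fun a ↦ ?_)
    simp only [ENNReal.toReal_mul, ENNReal.toReal_ofReal (hW₀ a), smul_eq_mul, mul_assoc]
  have hmass : 1 = c.toReal * ∫ a, W a ∂P := by
    simpa using hbias (measurable_const (a := (1 : ℝ)))
  rw [hbias hh, ← mul_assoc, mul_comm (∫ a, W a ∂P), ← hmass, one_mul]

section Variance

lemma variance_condExp_le {Ω : Type*} {m m₀ : MeasurableSpace Ω} {P : Measure Ω}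
    [IsProbabilityMeasure P] (hm : m ≤ m₀) {X : Ω → ℝ} (hX : MemLp X 2 P) :
    Var[P[X | m]; P] ≤ Var[X; P] := by
  rw [← integral_condVar_add_variance_condExp hm hX, le_add_iff_nonneg_left]
  exact integral_nonneg_of_ae (condExp_nonneg (ae_of_all _ fun a ↦ sq_nonneg _))

variable {α β : Type*} [MeasurableSpace α] [MeasurableSpace β]
  {μ : Measure α} {ν : Measure β} [IsProbabilityMeasure ν]

lemma sq_integral_le {f : β → ℝ} (hf : MemLp f 2 ν) : (∫ b, f b ∂ν) ^ 2 ≤ ∫ b, f b ^ 2 ∂ν := by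
  have := variance_nonneg f ν
  rw [variance_eq_sub hf] at this
  simpa using this

lemma variance_le_integral_sub_sq {f : β → ℝ} (hf : AEStronglyMeasurable f ν) (c : ℝ) :
    Var[f; ν] ≤ ∫ b, (f b - c) ^ 2 ∂ν := by
  rw [← variance_sub_const hf c]
  exact variance_le_expectation_sq (hf.sub aestronglyMeasurable_const)

lemma memLp_two_section {f : α × β → ℝ} [SFinite μ] (hf : MemLp f 2 (μ.prod ν)) :
    ∀ᵐ a ∂μ, MemLp (fun b ↦ f (a, b)) 2 ν := by
  filter_upwards [hf.1.prodMk_left, hf.integrable_sq.prod_right_ae] with a hmeas hint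
  exact (memLp_two_iff_integrable_sq hmeas).2 hint

lemma memLp_two_integral_section {f : α × β → ℝ} [SFinite μ] (hf : MemLp f 2 (μ.prod ν)) :
    MemLp (fun a ↦ ∫ b, f (a, b) ∂ν) 2 μ := by
  refine (memLp_two_iff_integrable_sq hf.1.integral_prod_right').2 ?_
  refine hf.integrable_sq.integral_prod_left.mono' (hf.1.integral_prod_right'.pow 2) ?_
  filter_upwards [memLp_two_section hf] with a ha
  rw [Real.norm_of_nonneg (by positivity)]
  exact sq_integral_le ha

lemma variance_prod [IsProbabilityMeasure μ] {f : α × β → ℝ} (hf : MemLp f 2 (μ.prod ν)) :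
    Var[f; μ.prod ν] =
      ∫ a, Var[fun b ↦ f (a, b); ν] ∂μ + Var[fun a ↦ ∫ b, f (a, b) ∂ν; μ] := by
  have hsection : ∀ᵐ a ∂μ, Var[fun b ↦ f (a, b); ν] =
      ∫ b, f (a, b) ^ 2 ∂ν - (∫ b, f (a, b) ∂ν) ^ 2 := by
    filter_upwards [memLp_two_section hf] with a ha using variance_eq_sub ha
  have hmean := memLp_two_integral_section hf
  rw [integral_congr_ae hsection, integral_sub hf.integrable_sq.integral_prod_left
    hmean.integrable_sq, variance_eq_sub hf, variance_eq_sub hmean]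
  simp only [Pi.pow_apply]
  rw [integral_prod _ hf.integrable_sq, integral_prod _ (hf.integrable one_le_two)]
  ring

lemma variance_integral_section_le [IsProbabilityMeasure μ] {f : α × β → ℝ} {c : β → ℝ}
    (hf : MemLp f 2 (μ.prod ν)) (hc : MemLp c 2 ν) :
    Var[fun a ↦ ∫ b, f (a, b) ∂ν; μ] ≤ ∫ a, ∫ b, (f (a, b) - c b) ^ 2 ∂ν ∂μ := by
  have hsub : MemLp (fun z ↦ f z - c z.2) 2 (μ.prod ν) :=
    hf.sub (hc.comp_measurePreserving measurePreserving_snd)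
  refine (variance_le_integral_sub_sq (memLp_two_integral_section hf).1 (∫ b, c b ∂ν)).trans ?_
  refine integral_mono_of_nonneg (ae_of_all _ fun a ↦ sq_nonneg _)
    hsub.integrable_sq.integral_prod_left ?_
  filter_upwards [memLp_two_section hf] with a ha
  rw [← integral_sub (ha.integrable one_le_two) (hc.integrable one_le_two)]
  exact sq_integral_le (ha.sub hc)

lemma variance_prod_le [IsProbabilityMeasure μ] {f c : α × β → ℝ} (hf : MemLp f 2 (μ.prod ν))
    (hc : MemLp c 2 (μ.prod ν)) (hconst : ∀ a a' b, c (a, b) = c (a', b)) :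
    Var[f; μ.prod ν] ≤
      ∫ z, (f z - c z) ^ 2 ∂μ.prod ν + ∫ a, Var[fun b ↦ f (a, b); ν] ∂μ := by
  obtain ⟨a₀, ha₀⟩ := (memLp_two_section hc).exists
  have hsq : Integrable (fun z ↦ (f z - c z) ^ 2) (μ.prod ν) := (hf.sub hc).integrable_sq
  rw [variance_prod hf, add_comm, integral_prod _ hsq]
  gcongr
  refine (variance_integral_section_le hf ha₀).trans_eq (integral_congr_ae (ae_of_all _ fun a ↦ ?_))
  simp only [hconst a a₀]

lemma measurePreserving_cons {n : ℕ} {E : Fin (n + 1) → Type*} [∀ i, MeasurableSpace (E i)]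
    (μ : ∀ i, Measure (E i)) [∀ i, IsProbabilityMeasure (μ i)] :
    MeasurePreserving (fun z : E 0 × (∀ j : Fin n, E j.succ) ↦ (Fin.cons z.1 z.2 : ∀ i, E i))
      ((μ 0).prod (Measure.pi fun j ↦ μ j.succ)) (Measure.pi μ) := by
  have hcons : (fun z : E 0 × (∀ j : Fin n, E j.succ) ↦ (Fin.cons z.1 z.2 : ∀ i, E i)) =
      (MeasurableEquiv.piFinSuccAbove E 0).symm :=
    funext fun z ↦ (Fin.insertNth_zero z.1 z.2).symm
  rw [hcons]
  exact (measurePreserving_piFinSuccAbove μ 0).symm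

/- Efron–Stein: the law of total variance splits off one coordinate at a time. -/
lemma variance_pi_le_sum_integral_sub_sq {n : ℕ} {E : Fin n → Type*} [∀ i, MeasurableSpace (E i)]
    (μ : ∀ i, Measure (E i)) [∀ i, IsProbabilityMeasure (μ i)] {f : (∀ i, E i) → ℝ}
    {c : Fin n → (∀ i, E i) → ℝ} (hf : MemLp f 2 (Measure.pi μ))
    (hc : ∀ j, MemLp (c j) 2 (Measure.pi μ))
    (hcj : ∀ j ω a, c j (Function.update ω j a) = c j ω) :
    Var[f; Measure.pi μ] ≤ ∑ j, ∫ ω, (f ω - c j ω) ^ 2 ∂Measure.pi μ := by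
  induction n with
  | zero =>
    have hconst : f = fun _ ↦ f default := funext fun ω ↦ congrArg f (Subsingleton.elim _ _)
    rw [hconst]
    simpa using variance_le_integral_sub_sq (ν := Measure.pi μ) (f := fun _ ↦ f default)
      aestronglyMeasurable_const (f default)
  | succ n ih =>
    let P : Measure (∀ j : Fin n, E j.succ) := Measure.pi fun j ↦ μ j.succ
    let e (z : E 0 × ∀ j : Fin n, E j.succ) : ∀ i, E i := Fin.cons z.1 z.2
    have he : MeasurePreserving e ((μ 0).prod P) (Measure.pi μ) := measurePreserving_cons μ
    have hfe := hf.comp_measurePreserving he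
    have hce (j) := (hc j).comp_measurePreserving he
    have hsq (j) : Integrable (fun z ↦ (f (e z) - c j (e z)) ^ 2) ((μ 0).prod P) :=
      (hfe.sub (hce j)).integrable_sq
    have hpull (j) : ∫ ω, (f ω - c j ω) ^ 2 ∂Measure.pi μ =
        ∫ z, (f (e z) - c j (e z)) ^ 2 ∂(μ 0).prod P :=
      (integral_comp_measurePreserving he (hf.sub (hc j)).integrable_sq.1).symm
    have htail : ∫ a, Var[fun ω ↦ f (e (a, ω)); P] ∂μ 0 ≤
        ∑ j : Fin n, ∫ z, (f (e z) - c j.succ (e z)) ^ 2 ∂(μ 0).prod P := by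
      simp only [fun j ↦ integral_prod _ (hsq j)]
      rw [← integral_finsetSum _ fun j _ ↦ (hsq j.succ).integral_prod_left]
      refine integral_mono_of_nonneg (ae_of_all _ fun a ↦ variance_nonneg _ _)
        (integrable_finsetSum _ fun j _ ↦ (hsq j.succ).integral_prod_left) ?_
      have hcsec := ae_all_iff.2 fun j : Fin n ↦ memLp_two_section (hce j.succ)
      filter_upwards [memLp_two_section hfe, hcsec] with a hfa hca
      refine ih (fun j ↦ μ j.succ) hfa hca fun j ω b ↦ ?_
      simp only [e, Fin.cons_update, hcj]
    rw [← he.variance_fun_comp hf.aemeasurable, Fin.sum_univ_succ]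
    simp only [hpull]
    refine (variance_prod_le hfe (hce 0) fun a a' ω ↦ ?_).trans ((add_le_add_iff_left _).2 htail)
    simp only [Function.comp_apply, e, ← Fin.update_cons_zero a' ω a, hcj]

lemma measurePreserving_update {ι : Type*} [Fintype ι] [DecidableEq ι] {E : ι → Type*}
    [∀ i, MeasurableSpace (E i)] (μ : ∀ i, Measure (E i)) [∀ i, IsProbabilityMeasure (μ i)]
    (i : ι) :
    MeasurePreserving (fun z : (∀ j, E j) × E i ↦ Function.update z.1 i z.2)
      ((Measure.pi μ).prod (μ i)) (Measure.pi μ) := by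
  refine ⟨measurable_update', (Measure.pi_eq fun s hs ↦ ?_).symm⟩
  have hpre : (fun z : (∀ j, E j) × E i ↦ Function.update z.1 i z.2) ⁻¹' univ.pi s =
      univ.pi (Function.update s i univ) ×ˢ s i := by
    ext ⟨ω, y⟩
    simp only [mem_preimage, mem_univ_pi, mem_prod]
    rw [Function.forall_update_iff ω fun j x ↦ x ∈ s j,
      Function.forall_update_iff s fun j t ↦ ω j ∈ t]
    simp [and_comm]
  rw [Measure.map_apply measurable_update' (.univ_pi hs), hpre, Measure.prod_prod, Measure.pi_pi,
    ← Finset.prod_erase_mul _ _ (Finset.mem_univ i),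
    ← Finset.prod_erase_mul _ _ (Finset.mem_univ i)]
  simp only [Function.update_self, measure_univ, mul_one]
  congr 1
  exact Finset.prod_congr rfl fun j hj ↦ by rw [Function.update_of_ne (Finset.ne_of_mem_erase hj)]

lemma condExp_comap_fst [IsFiniteMeasure μ] {f : α × β → ℝ} (hf : Integrable f (μ.prod ν)) :
    (μ.prod ν)[f | MeasurableSpace.comap Prod.fst inferInstance] =ᵐ[μ.prod ν]
      fun z ↦ ∫ b, f (z.1, b) ∂ν := by
  have hint : Integrable (fun z : α × β ↦ ∫ b, f (z.1, b) ∂ν) (μ.prod ν) :=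
    hf.integral_prod_left.comp_fst ν
  refine (ae_eq_condExp_of_forall_setIntegral_eq measurable_fst.comap_le hf
    (fun s _ _ ↦ hint.integrableOn) ?_ ?_).symm
  · rintro _ ⟨s, -, rfl⟩ -
    rw [← prod_univ, setIntegral_prod _ hint.integrableOn, setIntegral_prod _ hf.integrableOn]
    simp
  · obtain ⟨g, hg, hfg⟩ := hf.1.integral_prod_right'
    exact ⟨_, hg.comp_measurable (comap_measurable Prod.fst),
      Measure.quasiMeasurePreserving_fst.ae_eq hfg⟩

lemma variance_condExp_prod_le [IsProbabilityMeasure μ] {m : MeasurableSpace (α × β)}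
    (hm : m ≤ MeasurableSpace.comap Prod.fst inferInstance) {f : α × β → ℝ}
    (hf : MemLp f 2 (μ.prod ν)) :
    Var[(μ.prod ν)[f | m]; μ.prod ν] ≤ Var[fun a ↦ ∫ b, f (a, b) ∂ν; μ] := by
  have hfst : MeasurableSpace.comap Prod.fst inferInstance ≤
      (Prod.instMeasurableSpace : MeasurableSpace (α × β)) := measurable_fst.comap_le
  have hmean := (memLp_two_integral_section hf).comp_measurePreserving
    (measurePreserving_fst (μ := μ) (ν := ν))
  have hae : (μ.prod ν)[f | m] =ᵐ[μ.prod ν] (μ.prod ν)[(fun a ↦ ∫ b, f (a, b) ∂ν) ∘ Prod.fst | m] :=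
    (condExp_condExp_of_le hm hfst).symm.trans
      (condExp_congr_ae (condExp_comap_fst (hf.integrable one_le_two)))
  rw [variance_congr hae, ← (measurePreserving_fst (ν := ν)).variance_fun_comp
    (memLp_two_integral_section hf).aemeasurable]
  exact variance_condExp_le (hm.trans hfst) hmean

end Variance

section GermGrain

variable {E β ι : Type*}

/-- The region covered by the grains of the germs `ω k` with `k ∈ A`. -/
def cover (B : E → Set E) (A : Finset ι) (ω : ι → E) : Set E := ⋃ k ∈ A, B (ω k)

/-- The number of germs `ω k` with `k ∈ A` whose grain covers `x`. -/
def coverCount (B : E → Set E) (A : Finset ι) (ω : ι → E) (x : E) : ℕ :=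
  (A.filter fun k ↦ x ∈ B (ω k)).card

lemma mem_cover {B : E → Set E} {A : Finset ι} {ω : ι → E} {x : E} :
    x ∈ cover B A ω ↔ ∃ k ∈ A, x ∈ B (ω k) := by
  simp only [cover, mem_iUnion, exists_prop]

lemma coverCount_erase_of_notMem [DecidableEq ι] {B : E → Set E} (A : Finset ι) {ω : ι → E} {j : ι}
    {x : E} (hx : x ∉ B (ω j)) : coverCount B (A.erase j) ω x = coverCount B A ω x := by
  rw [coverCount, coverCount, Finset.filter_erase, Finset.erase_eq_of_notMem]
  simp [hx]

lemma coverCount_univ_erase [Fintype ι] [DecidableEq ι] {B : E → Set E} (i : ι) (ω : ι → E)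
    (x : E) :
    coverCount B (Finset.univ.erase i) ω x =
      ((Finset.univ.filter fun k ↦ x ∈ B (ω k)).erase i).card := by
  rw [coverCount, Finset.filter_erase]

lemma coverCount_erase_update [DecidableEq ι] {B : E → Set E} (A : Finset ι) (i : ι) (ω : ι → E)
    (x y : E) :
    coverCount B (A.erase i) (Function.update ω i y) x = coverCount B (A.erase i) ω x :=
  congrArg Finset.card <| Finset.filter_congr fun k hk ↦ by
    rw [Function.update_of_ne (Finset.ne_of_mem_erase hk)]

variable [MeasurableSpace E] [MeasurableSpace β]

/-- A germ–grain model: a germ `y` carries the grain `B y`, all grains have measure `p > 0`, and so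
has every reflected grain `{y | x ∈ B y}`. Balls of a homogeneous metric space are their own
reflected grains. -/
structure IsHomogeneousGrain (μ : Measure E) (B : E → Set E) (p : ℝ) : Prop where
  measurableSet : MeasurableSet {z : E × E | z.2 ∈ B z.1}
  pos : 0 < p
  measure_grain : ∀ y, μ (B y) = ENNReal.ofReal p
  measure_reflected_grain : ∀ x, μ {y | x ∈ B y} = ENNReal.ofReal p

/-- The measure gained by adding the grain of `y` to the region covered by `A`. -/
def gain (μ : Measure E) (B : E → Set E) (A : Finset ι) (ω : ι → E) (y : E) : ℝ :=
  μ.real (B y \ cover B A ω)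

/-- The measure of the intersection of the grains of `x` and `y`. -/
def overlap (μ : Measure E) (B : E → Set E) (x y : E) : ℝ := μ.real (B x ∩ B y)

/-- The law of an incident pair `(y, x)`, with `x` in the grain of `y`: two independent points
conditioned on being incident. -/
def incidenceLaw (μ : Measure E) (B : E → Set E) : Measure (E × E) :=
  (μ.prod μ)[|{z | z.2 ∈ B z.1}]

variable {μ : Measure E} {B : E → Set E} {p : ℝ}

section Measurability

lemma measurableSet_mem_grain (hB : MeasurableSet {z : E × E | z.2 ∈ B z.1}) {f g : β → E}
    (hf : Measurable f) (hg : Measurable g) : MeasurableSet {b | g b ∈ B (f b)} :=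
  (hf.prodMk hg) hB

lemma measurableSet_mem_cover (hB : MeasurableSet {z : E × E | z.2 ∈ B z.1}) (A : Finset ι)
    {f : β → ι → E} {g : β → E} (hf : Measurable f) (hg : Measurable g) :
    MeasurableSet {b | g b ∈ cover B A (f b)} := by
  have hcover : {b | g b ∈ cover B A (f b)} = ⋃ k ∈ A, {b | g b ∈ B (f b k)} := by
    ext b; simp only [mem_cover, mem_ofPred_eq, mem_iUnion, exists_prop]
  rw [hcover]
  exact A.measurableSet_biUnion fun k _ ↦ measurableSet_mem_grain hB (measurable_pi_iff.1 hf k) hg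

@[fun_prop]
lemma measurable_coverCount (hB : MeasurableSet {z : E × E | z.2 ∈ B z.1}) (A : Finset ι)
    {f : β → ι → E} {g : β → E} (hf : Measurable f) (hg : Measurable g) :
    Measurable fun b ↦ coverCount B A (f b) (g b) := by
  simp only [coverCount, Finset.card_filter]
  exact Finset.measurable_sum _ fun k _ ↦ .ite
    (measurableSet_mem_grain hB (measurable_pi_iff.1 hf k) hg) measurable_const measurable_const

variable [SFinite μ]

lemma measurable_measure_cover (hB : MeasurableSet {z : E × E | z.2 ∈ B z.1}) (A : Finset ι) :
    Measurable fun ω : ι → E ↦ μ (cover B A ω) :=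
  measurable_measure_prodMk_left (measurableSet_mem_cover hB A measurable_fst measurable_snd)

@[fun_prop]
lemma measurable_gain (hB : MeasurableSet {z : E × E | z.2 ∈ B z.1}) (A : Finset ι)
    {f : β → ι → E} {g : β → E} (hf : Measurable f) (hg : Measurable g) :
    Measurable fun b ↦ gain μ B A (f b) (g b) :=
  (measurable_measure_prodMk_left
    ((measurableSet_mem_grain hB (hg.comp measurable_fst) measurable_snd).diff
      (measurableSet_mem_cover hB A (hf.comp measurable_fst) measurable_snd))).ennreal_toReal

@[fun_prop]
lemma measurable_overlap (hB : MeasurableSet {z : E × E | z.2 ∈ B z.1})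
    {f g : β → E} (hf : Measurable f) (hg : Measurable g) :
    Measurable fun b ↦ overlap μ B (f b) (g b) :=
  (measurable_measure_prodMk_left
    ((measurableSet_mem_grain hB (hf.comp measurable_fst) measurable_snd).inter
      (measurableSet_mem_grain hB (hg.comp measurable_fst) measurable_snd))).ennreal_toReal

end Measurability

lemma IsHomogeneousGrain.measureReal_grain (hB : IsHomogeneousGrain μ B p) (y : E) :
    μ.real (B y) = p := by
  rw [measureReal_def, hB.measure_grain, ENNReal.toReal_ofReal hB.pos.le]

lemma IsHomogeneousGrain.measurableSet_grain (hB : IsHomogeneousGrain μ B p) (y : E) :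
    MeasurableSet (B y) :=
  measurableSet_mem_grain hB.measurableSet measurable_const measurable_id

section Gain

lemma gain_nonneg (A : Finset ι) (ω : ι → E) (y : E) : 0 ≤ gain μ B A ω y := measureReal_nonneg

lemma overlap_nonneg (x y : E) : 0 ≤ overlap μ B x y := measureReal_nonneg

variable [IsFiniteMeasure μ]

lemma gain_le (hB : IsHomogeneousGrain μ B p) (A : Finset ι) (ω : ι → E) (y : E) :
    gain μ B A ω y ≤ p :=
  (measureReal_mono sdiff_subset).trans_eq (hB.measureReal_grain y)

lemma overlap_le (hB : IsHomogeneousGrain μ B p) (x y : E) : overlap μ B x y ≤ p :=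
  (measureReal_mono inter_subset_left).trans_eq (hB.measureReal_grain x)

lemma abs_gain_sub_gain_le (hB : IsHomogeneousGrain μ B p) (A : Finset ι) (ω : ι → E) (y z : E) :
    |gain μ B A ω y - gain μ B A ω z| ≤ p := by
  rw [abs_le]
  constructor <;> linarith [gain_nonneg (μ := μ) (B := B) A ω y,
    gain_nonneg (μ := μ) (B := B) A ω z, gain_le hB A ω y, gain_le hB A ω z]

variable [DecidableEq ι]

lemma gain_le_gain_erase (A : Finset ι) (ω : ι → E) (j : ι) (y : E) :
    gain μ B A ω y ≤ gain μ B (A.erase j) ω y :=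
  measureReal_mono <| sdiff_subset_sdiff_right <|
    biUnion_subset_biUnion_left fun _ hk ↦ Finset.mem_of_mem_erase hk

lemma gain_erase_le (A : Finset ι) (ω : ι → E) (j : ι) (y : E) :
    gain μ B (A.erase j) ω y ≤ gain μ B A ω y + overlap μ B y (ω j) := by
  refine (measureReal_mono ?_).trans (measureReal_union_le _ _)
  rintro x ⟨hxy, hx⟩
  by_cases hxj : x ∈ B (ω j)
  · exact .inr ⟨hxy, hxj⟩
  · refine .inl ⟨hxy, fun hxA ↦ hx ?_⟩
    obtain ⟨k, hk, hxk⟩ := mem_cover.1 hxA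
    exact mem_cover.2 ⟨k, Finset.mem_erase.2 ⟨by rintro rfl; exact hxj hxk, hk⟩, hxk⟩

end Gain

section Incidence

variable [IsProbabilityMeasure μ]

lemma integral_overlap (hB : IsHomogeneousGrain μ B p) (y : E) :
    ∫ x, overlap μ B x y ∂μ = p ^ 2 := by
  have hmeas : MeasurableSet {z : E × E | z.2 ∈ B z.1 ∩ B y} :=
    hB.measurableSet.inter (measurable_snd (hB.measurableSet_grain y))
  have hright : ∫⁻ x, μ (B x ∩ B y) ∂μ = ENNReal.ofReal p * ENNReal.ofReal p := by
    calc ∫⁻ x, μ (B x ∩ B y) ∂μ = (μ.prod μ) {z | z.2 ∈ B z.1 ∩ B y} :=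
          (Measure.prod_apply hmeas).symm
      _ = ∫⁻ x, μ {z | x ∈ B z ∩ B y} ∂μ := Measure.prod_apply_symm hmeas
      _ = ∫⁻ x, (B y).indicator (fun _ ↦ ENNReal.ofReal p) x ∂μ := by
          refine lintegral_congr fun x ↦ ?_
          by_cases hx : x ∈ B y <;> simp [hx, hB.measure_reflected_grain]
      _ = ENNReal.ofReal p * ENNReal.ofReal p := by
          rw [lintegral_indicator_const (hB.measurableSet_grain y), hB.measure_grain]
  refine (integral_toReal (measurable_measure_prodMk_left hmeas).aemeasurable
    (ae_of_all _ fun _ ↦ measure_lt_top _ _)).trans ?_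
  change (∫⁻ x, μ (B x ∩ B y) ∂μ).toReal = p ^ 2
  rw [hright, ← ENNReal.ofReal_mul hB.pos.le,
    ENNReal.toReal_ofReal (by nlinarith [hB.pos]), sq]

lemma measure_incidence (hB : IsHomogeneousGrain μ B p) :
    (μ.prod μ) {z | z.2 ∈ B z.1} = ENNReal.ofReal p := by
  rw [Measure.prod_apply hB.measurableSet]
  simp [hB.measure_grain]

lemma isProbabilityMeasure_incidenceLaw (hB : IsHomogeneousGrain μ B p) :
    IsProbabilityMeasure (incidenceLaw μ B) :=
  cond_isProbabilityMeasure <| by simp [measure_incidence hB, hB.pos]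

lemma lintegral_incidenceLaw (hB : IsHomogeneousGrain μ B p) {f : E × E → ℝ≥0∞}
    (hf : Measurable f) :
    ∫⁻ z, f z ∂incidenceLaw μ B =
      ∫⁻ y, ∫⁻ x, (B y).indicator (fun _ ↦ (ENNReal.ofReal p)⁻¹) x * f (y, x) ∂μ ∂μ := by
  have hmeas : Measurable fun z : E × E ↦
      (B z.1).indicator (fun _ ↦ (ENNReal.ofReal p)⁻¹) z.2 * f z :=
    (measurable_const.indicator hB.measurableSet).mul hf
  refine Eq.trans ?_ (lintegral_prod _ hmeas.aemeasurable)
  rw [incidenceLaw, ProbabilityTheory.cond, lintegral_smul_measure, measure_incidence hB,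
    smul_eq_mul, ← lintegral_const_mul _ hf, ← lintegral_indicator hB.measurableSet]
  refine lintegral_congr fun z ↦ ?_
  by_cases hz : z.2 ∈ B z.1 <;> simp [hz]

lemma measurePreserving_fst_incidenceLaw (hB : IsHomogeneousGrain μ B p) :
    MeasurePreserving Prod.fst (incidenceLaw μ B) μ := by
  refine ⟨measurable_fst, Measure.ext fun s hs ↦ ?_⟩
  have hsection (y : E) : μ (Prod.mk y ⁻¹' ({z | z.2 ∈ B z.1} ∩ Prod.fst ⁻¹' s)) =
      s.indicator (fun _ ↦ ENNReal.ofReal p) y := by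
    by_cases hy : y ∈ s <;> simp [hy, preimage_preimage, hB.measure_grain]
  rw [Measure.map_apply measurable_fst hs, incidenceLaw, cond_apply hB.measurableSet,
    Measure.prod_apply (hB.measurableSet.inter (measurable_fst hs)), measure_incidence hB]
  simp only [hsection]
  rw [lintegral_indicator_const hs, ← mul_assoc,
    ENNReal.inv_mul_cancel (by simp [hB.pos]) (by simp), one_mul]

lemma measurePreserving_snd_incidenceLaw (hB : IsHomogeneousGrain μ B p) :
    MeasurePreserving Prod.snd (incidenceLaw μ B) μ := by
  refine ⟨measurable_snd, Measure.ext fun s hs ↦ ?_⟩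
  have hsection (x : E) : μ ((fun y ↦ (y, x)) ⁻¹' ({z | z.2 ∈ B z.1} ∩ Prod.snd ⁻¹' s)) =
      s.indicator (fun _ ↦ ENNReal.ofReal p) x := by
    by_cases hx : x ∈ s <;> simp [hx, preimage_preimage, hB.measure_reflected_grain]
  rw [Measure.map_apply measurable_snd hs, incidenceLaw, cond_apply hB.measurableSet,
    Measure.prod_apply_symm (hB.measurableSet.inter (measurable_snd hs)), measure_incidence hB]
  simp only [hsection]
  rw [lintegral_indicator_const hs, ← mul_assoc,
    ENNReal.inv_mul_cancel (by simp [hB.pos]) (by simp), one_mul]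

end Incidence

section MoveEffect

/-- The mean change of the covered measure when germ `i` moves from `ω i` to `y` with probability
`q (coverCount B A ω x)`, for an incident pair `(y, x)` drawn from `incidenceLaw`. The other germs
are those with index in `A`. -/
def moveEffect (μ : Measure E) (B : E → Set E) (q : ℕ → unitInterval) (i : ι) (A : Finset ι)
    (ω : ι → E) : ℝ :=
  ∫ z, q (coverCount B A ω z.2) * (gain μ B A ω z.1 - gain μ B A ω (ω i)) ∂incidenceLaw μ B

variable {q : ℕ → unitInterval}

lemma moveEffect_congr {i : ι} {A : Finset ι} {ω ω' : ι → E} (hi : ω i = ω' i)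
    (hA : ∀ k ∈ A, ω k = ω' k) : moveEffect μ B q i A ω = moveEffect μ B q i A ω' := by
  have hcover : cover B A ω = cover B A ω' := iUnion₂_congr fun k hk ↦ by rw [hA k hk]
  have hcount (x) : coverCount B A ω x = coverCount B A ω' x :=
    congrArg Finset.card (Finset.filter_congr fun k hk ↦ by rw [hA k hk])
  simp only [moveEffect, gain, hcover, hcount, hi]

section Pointwise

variable [IsFiniteMeasure μ]

lemma abs_mul_gain_sub_gain_le (hB : IsHomogeneousGrain μ B p) (A : Finset ι) (ω : ι → E)
    (k : ℕ) (y z : E) : |q k * (gain μ B A ω y - gain μ B A ω z)| ≤ p := by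
  rw [abs_mul, abs_of_nonneg (q k).2.1]
  exact (mul_le_of_le_one_left (abs_nonneg _) (q k).2.2).trans (abs_gain_sub_gain_le hB A ω y z)

instance : IsZeroOrProbabilityMeasure (incidenceLaw μ B) := by
  unfold incidenceLaw; infer_instance

lemma abs_mul_gain_sub_gain_sub_erase_le [DecidableEq ι] (hB : IsHomogeneousGrain μ B p)
    (A : Finset ι) (ω : ι → E) (j : ι) (x y z : E) :
    |q (coverCount B A ω x) * (gain μ B A ω y - gain μ B A ω z) -
        q (coverCount B (A.erase j) ω x) *
          (gain μ B (A.erase j) ω y - gain μ B (A.erase j) ω z)| ≤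
      (B (ω j)).indicator (fun _ ↦ p) x + overlap μ B y (ω j) + overlap μ B z (ω j) := by
  set a := gain μ B A ω y - gain μ B A ω z with ha
  set a' := gain μ B (A.erase j) ω y - gain μ B (A.erase j) ω z with ha'
  set s : ℝ := (q (coverCount B A ω x) : ℝ) with hs_def
  set s' : ℝ := (q (coverCount B (A.erase j) ω x) : ℝ) with hs'_def
  have hs : s ∈ unitInterval := (q _).2
  have hs'I : s' ∈ unitInterval := (q _).2
  have hdiff : |a - a'| ≤ overlap μ B y (ω j) + overlap μ B z (ω j) := by
    rw [abs_le, ha, ha']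
    constructor <;> linarith [gain_le_gain_erase (μ := μ) (B := B) A ω j y,
      gain_le_gain_erase (μ := μ) (B := B) A ω j z, gain_erase_le (μ := μ) (B := B) A ω j y,
      gain_erase_le (μ := μ) (B := B) A ω j z]
  have hcount : |(s - s') * a| ≤ (B (ω j)).indicator (fun _ ↦ p) x := by
    by_cases hx : x ∈ B (ω j)
    · rw [indicator_of_mem hx, abs_mul]
      refine (mul_le_of_le_one_left (abs_nonneg _) ?_).trans (abs_gain_sub_gain_le hB A ω y z)
      exact abs_sub_le_of_le_of_le hs.1 hs.2 hs'I.1 hs'I.2 |>.trans_eq (sub_zero 1)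
    · simp [hx, hs_def, hs'_def, coverCount_erase_of_notMem]
  calc |s * a - s' * a'| = |(s - s') * a + s' * (a - a')| := by congr 1; ring
    _ ≤ |(s - s') * a| + |s' * (a - a')| := abs_add_le _ _
    _ ≤ |(s - s') * a| + |a - a'| := by
        refine (add_le_add_iff_left _).2 ?_
        rw [abs_mul, abs_of_nonneg hs'I.1]
        exact mul_le_of_le_one_left (abs_nonneg _) hs'I.2
    _ ≤ _ := by linarith

end Pointwise

variable [IsProbabilityMeasure μ]

@[fun_prop]
lemma measurable_moveEffect (hB : MeasurableSet {z : E × E | z.2 ∈ B z.1}) (i : ι) (A : Finset ι) :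
    Measurable (moveEffect μ B q i A) := by
  have hint : Measurable fun w : (ι → E) × E × E ↦
      (q (coverCount B A w.1 w.2.2) : ℝ) * (gain μ B A w.1 w.2.1 - gain μ B A w.1 (w.1 i)) := by
    fun_prop
  exact (hint.stronglyMeasurable.integral_prod_right' (ν := incidenceLaw μ B)).measurable

lemma integrable_moveEffect (hB : IsHomogeneousGrain μ B p) (i : ι) (A : Finset ι) (ω : ι → E) :
    Integrable (fun z ↦ q (coverCount B A ω z.2) * (gain μ B A ω z.1 - gain μ B A ω (ω i)))
      (incidenceLaw μ B) := by
  have hmeas := hB.measurableSet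
  have := isProbabilityMeasure_incidenceLaw hB
  have hint : Measurable fun z : E × E ↦
      (q (coverCount B A ω z.2) : ℝ) * (gain μ B A ω z.1 - gain μ B A ω (ω i)) := by fun_prop
  exact .of_bound hint.aestronglyMeasurable p <|
    ae_of_all _ fun z ↦ abs_mul_gain_sub_gain_le hB A ω _ _ _

lemma abs_moveEffect_le (hB : IsHomogeneousGrain μ B p) (i : ι) (A : Finset ι) (ω : ι → E) :
    |moveEffect μ B q i A ω| ≤ p := by
  have := isProbabilityMeasure_incidenceLaw hB
  have hbound (z : E × E) :
      ‖q (coverCount B A ω z.2) * (gain μ B A ω z.1 - gain μ B A ω (ω i))‖ ≤ p :=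
    abs_mul_gain_sub_gain_le hB A ω _ _ _
  simpa [moveEffect] using
    norm_integral_le_of_norm_le_const (μ := incidenceLaw μ B) (ae_of_all _ hbound)

lemma memLp_moveEffect (hB : IsHomogeneousGrain μ B p) {P : Measure (ι → E)} [IsFiniteMeasure P]
    (r : ℝ≥0∞) (i : ι) (A : Finset ι) : MemLp (moveEffect μ B q i A) r P :=
  .of_bound (measurable_moveEffect hB.measurableSet i A).aestronglyMeasurable p <|
    ae_of_all _ fun ω ↦ abs_moveEffect_le hB i A ω

lemma memLp_overlap (hB : IsHomogeneousGrain μ B p) {ν : Measure β} [IsFiniteMeasure ν]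
    (r : ℝ≥0∞) {f g : β → E} (hf : Measurable f) (hg : Measurable g) :
    MemLp (fun b ↦ overlap μ B (f b) (g b)) r ν :=
  .of_bound (measurable_overlap hB.measurableSet hf hg).aestronglyMeasurable p <|
    ae_of_all _ fun _ ↦ (Real.norm_of_nonneg (overlap_nonneg _ _)).trans_le (overlap_le hB _ _)

lemma integrable_overlap (hB : IsHomogeneousGrain μ B p) {ν : Measure β} [IsFiniteMeasure ν]
    {f g : β → E} (hf : Measurable f) (hg : Measurable g) :
    Integrable (fun b ↦ overlap μ B (f b) (g b)) ν :=
  (memLp_overlap hB 1 hf hg).integrable le_rfl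

lemma abs_moveEffect_sub_erase_le [DecidableEq ι] (hB : IsHomogeneousGrain μ B p) (i j : ι)
    (A : Finset ι) (ω : ι → E) :
    |moveEffect μ B q i A ω - moveEffect μ B q i (A.erase j) ω| ≤
      2 * p ^ 2 + overlap μ B (ω i) (ω j) := by
  have hfst := measurePreserving_fst_incidenceLaw hB
  have hsnd := measurePreserving_snd_incidenceLaw hB
  have hgrain : Integrable ((B (ω j)).indicator fun _ ↦ p) μ :=
    (integrable_const p).indicator (hB.measurableSet_grain _)
  have hgrain' : Integrable (fun z : E × E ↦ (B (ω j)).indicator (fun _ ↦ p) z.2)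
    (incidenceLaw μ B) := hsnd.integrable_comp_of_integrable hgrain
  have hoverlap : Integrable (fun y ↦ overlap μ B y (ω j)) μ :=
    integrable_overlap hB measurable_id measurable_const
  have hoverlap' : Integrable (fun z : E × E ↦ overlap μ B z.1 (ω j)) (incidenceLaw μ B) :=
    integrable_overlap hB measurable_fst measurable_const
  have hbound : Integrable (fun z : E × E ↦ (B (ω j)).indicator (fun _ ↦ p) z.2 +
      overlap μ B z.1 (ω j) + overlap μ B (ω i) (ω j)) (incidenceLaw μ B) :=
    (hgrain'.add hoverlap').add (integrable_const _)
  rw [moveEffect, moveEffect, ← integral_sub (integrable_moveEffect hB i A ω)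
    (integrable_moveEffect hB i _ ω), ← Real.norm_eq_abs]
  refine (norm_integral_le_of_norm_le hbound (ae_of_all _ fun z ↦ ?_)).trans_eq ?_
  · exact abs_mul_gain_sub_gain_sub_erase_le hB A ω j z.2 z.1 (ω i)
  have := isProbabilityMeasure_incidenceLaw hB
  rw [integral_add (hgrain'.fun_add hoverlap') (integrable_const _), integral_add hgrain' hoverlap',
    integral_comp_measurePreserving hsnd hgrain.1, integral_comp_measurePreserving hfst hoverlap.1]
  simp only [integral_overlap hB, integral_indicator_const _ (hB.measurableSet_grain _),
    hB.measureReal_grain, smul_eq_mul, integral_const, probReal_univ]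
  ring

end MoveEffect

section OverlapMoments

variable [Fintype ι] [DecidableEq ι] [IsProbabilityMeasure μ]

lemma integral_overlap_mul (hB : IsHomogeneousGrain μ B p) {i j : ι} (hij : i ≠ j)
    {F : (ι → E) → ℝ} (hF : Integrable F (Measure.pi fun _ ↦ μ))
    (hFi : ∀ ω a, F (Function.update ω i a) = F ω) :
    ∫ ω, overlap μ B (ω i) (ω j) * F ω ∂(Measure.pi fun _ : ι ↦ μ) =
      p ^ 2 * ∫ ω, F ω ∂(Measure.pi fun _ : ι ↦ μ) := by
  have hprod : Integrable (fun z : (ι → E) × E ↦ overlap μ B z.2 (z.1 j) * F z.1)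
      ((Measure.pi fun _ ↦ μ).prod μ) := (hF.comp_fst μ).mul_of_top_right <|
    memLp_overlap hB ∞ measurable_snd ((measurable_pi_apply j).comp measurable_fst)
  have hpi : Integrable (fun ω : ι → E ↦ overlap μ B (ω i) (ω j) * F ω) (Measure.pi fun _ ↦ μ) :=
    hF.mul_of_top_right (memLp_overlap hB ∞ (measurable_pi_apply i) (measurable_pi_apply j))
  rw [← integral_comp_measurePreserving (measurePreserving_update (fun _ : ι ↦ μ) i) hpi.1]
  simp only [hFi, Function.update_self, Function.update_of_ne hij.symm]
  rw [integral_prod _ hprod]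
  simp only [integral_mul_const, integral_overlap hB, integral_const_mul]

lemma integral_overlap_mul_overlap_le (hB : IsHomogeneousGrain μ B p) {i j k : ι} (hij : i ≠ j)
    (hkj : k ≠ j) :
    ∫ ω, overlap μ B (ω i) (ω j) * overlap μ B (ω k) (ω j) ∂(Measure.pi fun _ : ι ↦ μ) ≤
      if i = k then p ^ 3 else p ^ 4 := by
  have hmean (l : ι) (hlj : l ≠ j) :
      ∫ ω, overlap μ B (ω l) (ω j) ∂(Measure.pi fun _ : ι ↦ μ) = p ^ 2 := by
    simpa using integral_overlap_mul hB hlj (integrable_const 1) fun _ _ ↦ rfl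
  have hint (l : ι) : Integrable (fun ω : ι → E ↦ overlap μ B (ω l) (ω j))
      (Measure.pi fun _ ↦ μ) :=
    integrable_overlap hB (measurable_pi_apply l) (measurable_pi_apply j)
  split_ifs with hik
  · subst hik
    calc ∫ ω, overlap μ B (ω i) (ω j) * overlap μ B (ω i) (ω j) ∂(Measure.pi fun _ : ι ↦ μ)
        ≤ ∫ ω, p * overlap μ B (ω i) (ω j) ∂(Measure.pi fun _ : ι ↦ μ) :=
          integral_mono_of_nonneg (ae_of_all _ fun _ ↦ mul_self_nonneg _) ((hint i).const_mul p) <|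
            ae_of_all _ fun _ ↦ mul_le_mul_of_nonneg_right (overlap_le hB _ _) (overlap_nonneg _ _)
      _ = p ^ 3 := by rw [integral_const_mul, hmean i hij]; ring
  · rw [integral_overlap_mul hB hij (hint k) fun ω a ↦ by
      rw [Function.update_of_ne (Ne.symm hik), Function.update_of_ne hij.symm], hmean k hkj]
    exact le_of_eq (by ring)

lemma integral_sq_sum_overlap_le (hB : IsHomogeneousGrain μ B p) (j : ι) :
    ∫ ω, (∑ i ∈ Finset.univ.erase j, overlap μ B (ω i) (ω j)) ^ 2 ∂(Measure.pi fun _ : ι ↦ μ) ≤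
      Fintype.card ι * p ^ 3 + Fintype.card ι ^ 2 * p ^ 4 := by
  have hp := hB.pos
  have hmem (i : ι) (r : ℝ≥0∞) : MemLp (fun ω : ι → E ↦ overlap μ B (ω i) (ω j)) r
      (Measure.pi fun _ ↦ μ) := memLp_overlap hB r (measurable_pi_apply i) (measurable_pi_apply j)
  have hint (i k : ι) : Integrable (fun ω : ι → E ↦
      overlap μ B (ω i) (ω j) * overlap μ B (ω k) (ω j)) (Measure.pi fun _ ↦ μ) :=
    (hmem i 2).integrable_mul (hmem k 2)
  have hcard : ((Finset.univ.erase j).card : ℝ) ≤ Fintype.card ι := by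
    exact_mod_cast Finset.card_le_univ _
  simp only [sq (Finset.sum _ _), Finset.sum_mul_sum]
  rw [integral_finsetSum _ fun i _ ↦ integrable_finsetSum _ fun k _ ↦ hint i k]
  simp only [integral_finsetSum _ fun k _ ↦ hint _ k]
  calc _ ≤ ∑ i ∈ Finset.univ.erase j, ∑ k ∈ Finset.univ.erase j,
        ((if i = k then p ^ 3 else 0) + p ^ 4) := by
        refine Finset.sum_le_sum fun i hi ↦ Finset.sum_le_sum fun k hk ↦
          (integral_overlap_mul_overlap_le hB (Finset.ne_of_mem_erase hi)
            (Finset.ne_of_mem_erase hk)).trans ?_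
        split_ifs
        · exact le_add_of_nonneg_right (by positivity)
        · exact (zero_add _).ge
    _ = (Finset.univ.erase j).card * p ^ 3 + (Finset.univ.erase j).card ^ 2 * p ^ 4 := by
        simp only [Finset.sum_add_distrib, Finset.sum_ite_eq, Finset.sum_const, nsmul_eq_mul]
        rw [Finset.sum_congr rfl fun i hi ↦ if_pos hi]
        simp only [Finset.sum_const, nsmul_eq_mul]
        ring
    _ ≤ _ := by gcongr

end OverlapMoments

section Drift

variable {n : ℕ}

/-- The conditional mean, given the configuration `ω`, of the change of the covered measure when a
uniformly chosen germ is moved as in `moveEffect`. -/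
def drift (μ : Measure E) (B : E → Set E) (q : ℕ → unitInterval) (ω : Fin n → E) : ℝ :=
  (n : ℝ)⁻¹ * ∑ i, moveEffect μ B q i (Finset.univ.erase i) ω

/-- The variant of `drift` that ignores germ `j`. -/
def driftWithout (μ : Measure E) (B : E → Set E) (q : ℕ → unitInterval) (j : Fin n)
    (ω : Fin n → E) : ℝ :=
  (n : ℝ)⁻¹ * ∑ i ∈ Finset.univ.erase j, moveEffect μ B q i ((Finset.univ.erase i).erase j) ω

variable {q : ℕ → unitInterval}

lemma driftWithout_update (j : Fin n) (ω : Fin n → E) (a : E) :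
    driftWithout μ B q j (Function.update ω j a) = driftWithout μ B q j ω := by
  refine congrArg ((n : ℝ)⁻¹ * ·) <|
    Finset.sum_congr rfl fun i hi ↦ moveEffect_congr ?_ fun k hk ↦ ?_
  · exact Function.update_of_ne (Finset.ne_of_mem_erase hi) _ _
  · exact Function.update_of_ne (Finset.ne_of_mem_erase hk) _ _

variable [IsProbabilityMeasure μ]

lemma abs_drift_sub_driftWithout_le (hB : IsHomogeneousGrain μ B p) (j : Fin n) (ω : Fin n → E) :
    |drift μ B q ω - driftWithout μ B q j ω| ≤ (n : ℝ)⁻¹ * (p + 2 * n * p ^ 2 +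
      ∑ i ∈ Finset.univ.erase j, overlap μ B (ω i) (ω j)) := by
  have hcard : ((Finset.univ.erase j).card : ℝ) ≤ n := by
    exact_mod_cast (Finset.card_le_univ _).trans_eq (Fintype.card_fin n)
  rw [drift, driftWithout, ← mul_sub, abs_mul, abs_of_nonneg (by positivity),
    ← Finset.add_sum_erase _ _ (Finset.mem_univ j), add_sub_assoc, ← Finset.sum_sub_distrib]
  gcongr
  calc _ ≤ p + ∑ i ∈ Finset.univ.erase j, (2 * p ^ 2 + overlap μ B (ω i) (ω j)) := by
        refine (abs_add_le _ _).trans (add_le_add (abs_moveEffect_le hB _ _ _) ?_)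
        exact (Finset.abs_sum_le_sum_abs _ _).trans
          (Finset.sum_le_sum fun i _ ↦ abs_moveEffect_sub_erase_le hB i j _ ω)
    _ = p + (Finset.univ.erase j).card * (2 * p ^ 2) +
          ∑ i ∈ Finset.univ.erase j, overlap μ B (ω i) (ω j) := by
        rw [Finset.sum_add_distrib, Finset.sum_const, nsmul_eq_mul, add_assoc]
    _ ≤ p + n * (2 * p ^ 2) + ∑ i ∈ Finset.univ.erase j, overlap μ B (ω i) (ω j) := by gcongr
    _ = _ := by ring

lemma memLp_drift (hB : IsHomogeneousGrain μ B p) :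
    MemLp (drift μ B q : (Fin n → E) → ℝ) 2 (Measure.pi fun _ ↦ μ) := by
  have hsum : MemLp (fun ω : Fin n → E ↦ ∑ i, moveEffect μ B q i (Finset.univ.erase i) ω)
      2 (Measure.pi fun _ ↦ μ) := memLp_finsetSum _ fun i _ ↦ memLp_moveEffect hB 2 i _
  exact hsum.const_mul _

lemma memLp_driftWithout (hB : IsHomogeneousGrain μ B p) (j : Fin n) :
    MemLp (driftWithout μ B q j) 2 (Measure.pi fun _ ↦ μ) := by
  have hsum : MemLp (fun ω : Fin n → E ↦ ∑ i ∈ Finset.univ.erase j,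
      moveEffect μ B q i ((Finset.univ.erase i).erase j) ω)
      2 (Measure.pi fun _ ↦ μ) := memLp_finsetSum _ fun i _ ↦ memLp_moveEffect hB 2 i _
  exact hsum.const_mul _

lemma integral_sq_drift_sub_driftWithout_le (hB : IsHomogeneousGrain μ B p) (j : Fin n) :
    ∫ ω, (drift μ B q ω - driftWithout μ B q j ω) ^ 2 ∂(Measure.pi fun _ ↦ μ) ≤
      ((n : ℝ)⁻¹) ^ 2 *
        (2 * (p + 2 * n * p ^ 2) ^ 2 + 2 * (n * p ^ 3 + n ^ 2 * p ^ 4)) := by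
  let S (ω : Fin n → E) : ℝ := ∑ i ∈ Finset.univ.erase j, overlap μ B (ω i) (ω j)
  have hS : MemLp S 2 (Measure.pi fun _ ↦ μ) := memLp_finsetSum _ fun i _ ↦
    memLp_overlap hB 2 (measurable_pi_apply i) (measurable_pi_apply j)
  have hbound : Integrable (fun ω ↦ ((n : ℝ)⁻¹) ^ 2 * (2 * (p + 2 * n * p ^ 2) ^ 2 + 2 * S ω ^ 2))
      (Measure.pi fun _ ↦ μ) :=
    ((integrable_const _).add (hS.integrable_sq.const_mul 2)).const_mul _
  refine (integral_mono_of_nonneg (ae_of_all _ fun ω ↦ sq_nonneg _) hbound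
    (ae_of_all _ fun ω ↦ ?_)).trans ?_
  · calc (drift μ B q ω - driftWithout μ B q j ω) ^ 2
        ≤ ((n : ℝ)⁻¹ * (p + 2 * n * p ^ 2 + S ω)) ^ 2 :=
          sq_le_sq' (by linarith [neg_le_of_abs_le (abs_drift_sub_driftWithout_le (q := q) hB j ω)])
            (le_of_abs_le (abs_drift_sub_driftWithout_le hB j ω))
      _ ≤ ((n : ℝ)⁻¹) ^ 2 * (2 * (p + 2 * n * p ^ 2) ^ 2 + 2 * S ω ^ 2) := by
          rw [mul_pow, ← mul_add]
          gcongr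
          exact add_sq_le
  · rw [integral_const_mul, integral_add (integrable_const _) (hS.integrable_sq.const_mul 2),
      integral_const_mul 2 (fun ω ↦ S ω ^ 2), integral_const, probReal_univ, smul_eq_mul, one_mul]
    have hsecond := integral_sq_sum_overlap_le hB j
    rw [Fintype.card_fin] at hsecond
    gcongr

lemma variance_drift_le (hB : IsHomogeneousGrain μ B p) :
    Var[(drift μ B q : (Fin n → E) → ℝ); Measure.pi fun _ ↦ μ] ≤
      (n : ℝ)⁻¹ * (2 * (p + 2 * n * p ^ 2) ^ 2 + 2 * (n * p ^ 3 + n ^ 2 * p ^ 4)) := by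
  refine (variance_pi_le_sum_integral_sub_sq (fun _ ↦ μ) (memLp_drift hB)
    (memLp_driftWithout (q := q) hB) driftWithout_update).trans ?_
  refine (Finset.sum_le_sum fun j _ ↦ integral_sq_drift_sub_driftWithout_le hB j).trans_eq ?_
  rw [Finset.sum_const, Finset.card_univ, Fintype.card_fin, nsmul_eq_mul]
  rcases n.eq_zero_or_pos with rfl | hn
  · simp
  · field_simp

end Drift
end GermGrain

section Weights

/-- Weights `q` for which moving a germ as in `movedConfig` size-biases the covered measure, see
`map_movedConfig`; the mean of the covered measure is then `(1 + θ)⁻¹`. -/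
structure IsBalanced (n : ℕ) (p θ : ℝ) (q : ℕ → unitInterval) : Prop where
  apply_zero : q 0 = 1
  balance : ∀ k < n, (k + 1) * (1 - p) * q k = p * ((n - (k + 1)) * q (k + 1) + n * θ)

/-- The solution of the recursion that `IsBalanced` imposes on `q`, started from the largest index;
it is rescaled by powers of the odds `r = (1 - p) / p` so as to make sense for `r = 0` too. -/
def balanceSeq (n : ℕ) (r : ℝ) : ℕ → ℝ
  | 0 => 1 / n
  | m + 1 => ((m + 1) * balanceSeq n r m + r ^ (m + 1)) / (n - (m + 1))

lemma balanceSeq_pos {n m : ℕ} {r : ℝ} (hr : 0 ≤ r) (hm : m < n) : 0 < balanceSeq n r m := by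
  induction m with
  | zero =>
    have : (0 : ℝ) < n := by exact_mod_cast hm
    simp only [balanceSeq]
    positivity
  | succ m ih =>
    have := ih (by lia)
    have : (0 : ℝ) < n - (m + 1) := sub_pos.2 (by exact_mod_cast hm)
    simp only [balanceSeq]
    positivity

lemma sub_mul_balanceSeq {n m : ℕ} (r : ℝ) (hm : m < n) :
    (n - m) * balanceSeq n r m = m * balanceSeq n r (m - 1) + r ^ m := by
  cases m with
  | zero =>
    have : (n : ℝ) ≠ 0 := by exact_mod_cast hm.ne'
    simp [balanceSeq, this]
  | succ m =>
    have : (n - (m + 1) : ℝ) ≠ 0 := (sub_pos.2 (by exact_mod_cast hm)).ne'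
    rw [balanceSeq]
    push_cast
    field_simp

lemma mul_balanceSeq_le_succ {n m : ℕ} {r : ℝ} (hr : 0 ≤ r) (hm : m + 1 < n) :
    r * balanceSeq n r m ≤ balanceSeq n r (m + 1) := by
  have hpos := balanceSeq_pos hr (Nat.lt_of_succ_lt hm)
  have hmn : (0 : ℝ) < n - (m + 1) := sub_pos.2 (by exact_mod_cast hm)
  have hprev : m * (r * balanceSeq n r (m - 1)) ≤ m * balanceSeq n r m := by
    cases m with
    | zero => simp
    | succ m =>
      gcongr
      exact mul_balanceSeq_le_succ hr (Nat.lt_of_succ_lt hm)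
  have hrec := sub_mul_balanceSeq r (Nat.lt_of_succ_lt hm)
  rw [balanceSeq, le_div_iff₀ hmn]
  calc r * balanceSeq n r m * (n - (m + 1))
      = m * (r * balanceSeq n r (m - 1)) + r ^ (m + 1) - r * balanceSeq n r m := by
        linear_combination r * hrec
    _ ≤ (m + 1) * balanceSeq n r m + r ^ (m + 1) := by nlinarith [mul_nonneg hr hpos.le]

lemma pow_mul_balanceSeq_le_add {n m j : ℕ} {r : ℝ} (hr : 0 ≤ r) (hmj : m + j < n) :
    r ^ j * balanceSeq n r m ≤ balanceSeq n r (m + j) := by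
  induction j with
  | zero => simp
  | succ j ih =>
    calc r ^ (j + 1) * balanceSeq n r m = r * (r ^ j * balanceSeq n r m) := by ring
      _ ≤ r * balanceSeq n r (m + j) := by gcongr; exact ih (by lia)
      _ ≤ balanceSeq n r (m + (j + 1)) := mul_balanceSeq_le_succ hr hmj

lemma exists_isBalanced {n : ℕ} {p : ℝ} (hn : 0 < n) (hp₀ : 0 < p) (hp₁ : p ≤ 1) :
    ∃ θ q, IsBalanced n p θ q := by
  obtain ⟨r, hr, hodds⟩ : ∃ r, 0 ≤ r ∧ p * r = 1 - p :=
    ⟨(1 - p) / p, div_nonneg (sub_nonneg.2 hp₁) hp₀.le, mul_div_cancel₀ _ hp₀.ne'⟩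
  set C := balanceSeq n r (n - 1)
  have hC : 0 < C := balanceSeq_pos hr (by lia)
  have hle (m : ℕ) (hm : m ≤ n - 1) :
      r ^ (n - 1 - m) * balanceSeq n r m / C ∈ Set.Icc (0 : ℝ) 1 := by
    have := balanceSeq_pos hr (m := m) (n := n) (by lia)
    have hpow := pow_mul_balanceSeq_le_add hr (n := n) (m := m) (j := n - 1 - m) (by lia)
    rw [Nat.add_sub_cancel' hm] at hpow
    exact ⟨by positivity, (div_le_one hC).2 hpow⟩
  refine ⟨r ^ n / (n * C), fun k ↦ ⟨_, hle (n - 1 - k) (Nat.sub_le _ _)⟩, ?_, fun k hk ↦ ?_⟩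
  · refine Subtype.ext ?_
    simp [C, hC.ne']
  · obtain ⟨m, hm⟩ : ∃ m, n = m + k + 1 := ⟨n - 1 - k, by lia⟩
    have hn' : (n : ℝ) = m + k + 1 := by exact_mod_cast hm
    have hrec := sub_mul_balanceSeq r (show m < n by lia)
    have hpow : r ^ n = r ^ m * r ^ k * r := by rw [hm]; ring
    have hlast : m * r ^ (n - 1 - (m - 1)) * balanceSeq n r (m - 1) =
        m * (r ^ k * r) * balanceSeq n r (m - 1) := by
      cases m with
      | zero => simp
      | succ m => rw [← pow_succ, show n - 1 - (m + 1 - 1) = k + 1 by lia]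
    simp only [show n - 1 - k = m by lia, show n - 1 - (k + 1) = m - 1 by lia,
      show n - 1 - m = k by lia, hpow, ← hodds]
    field_simp
    rw [hn'] at hrec ⊢
    linear_combination r * r ^ k * hrec - hlast

variable {E : Type*} {n : ℕ} {p θ : ℝ} {q : ℕ → unitInterval} {B : E → Set E}

/- Up to the factor `n`, the left-hand side is the density of the law of the configuration after the
move, for a fixed point `x` and with `S` the set of indices of the germs covering `x`. -/
lemma IsBalanced.sum_weights_eq (hq : IsBalanced n p θ q) (hp : 0 < p) (S : Finset (Fin n)) :
    ∑ i, (p⁻¹ * (if i ∈ S then 1 else 0) * q (S.erase i).card + (1 - q (S.erase i).card)) =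
      n * (1 + θ) * if S.Nonempty then 1 else 0 := by
  have hsplit (i : Fin n) :
      p⁻¹ * (if i ∈ S then 1 else 0) * q (S.erase i).card + (1 - q (S.erase i).card : ℝ) =
        (if i ∈ S then p⁻¹ * q (S.card - 1) + (q S.card - q (S.card - 1)) else 0) +
          (1 - q S.card) := by
    split_ifs with hi
    · rw [Finset.card_erase_of_mem hi]; ring
    · rw [Finset.erase_eq_of_notMem hi]; ring
  simp only [hsplit, Finset.sum_add_distrib, Finset.sum_ite_mem, Finset.univ_inter,
    Finset.sum_const, Finset.card_univ, Fintype.card_fin, nsmul_eq_mul]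
  rcases S.eq_empty_or_nonempty with rfl | hS
  · simp [hq.apply_zero]
  · obtain ⟨k, hk⟩ := Nat.exists_eq_add_one.2 hS.card_pos
    have hkn : k < n := by
      have := S.card_le_univ
      rw [Fintype.card_fin] at this
      lia
    have hbalance := hq.balance k hkn
    rw [if_pos hS, hk, Nat.add_sub_cancel]
    push_cast
    field_simp
    linear_combination hbalance

/-- The density at `ω` of the law of the configuration after a move of germ `i`, conditionally on
the point `x` of the incident pair. -/
def moveWeight (B : E → Set E) (p : ℝ) (q : ℕ → unitInterval) (i : Fin n) (ω : Fin n → E) (x : E) :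
    ℝ :=
  p⁻¹ * (if x ∈ B (ω i) then 1 else 0) * q (coverCount B (Finset.univ.erase i) ω x) +
    (1 - q (coverCount B (Finset.univ.erase i) ω x))

lemma moveWeight_nonneg (hp : 0 < p) (i : Fin n) (ω : Fin n → E) (x : E) :
    0 ≤ moveWeight B p q i ω x := by
  have := unitInterval.nonneg (q (coverCount B (Finset.univ.erase i) ω x))
  have := unitInterval.one_minus_nonneg (q (coverCount B (Finset.univ.erase i) ω x))
  unfold moveWeight
  positivity

lemma ofReal_moveWeight (hp : 0 < p) (i : Fin n) (ω : Fin n → E) (x : E) :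
    ENNReal.ofReal (moveWeight B p q i ω x) =
      (B (ω i)).indicator (fun _ ↦ (ENNReal.ofReal p)⁻¹) x *
          ENNReal.ofReal (q (coverCount B (Finset.univ.erase i) ω x)) +
        ENNReal.ofReal (1 - q (coverCount B (Finset.univ.erase i) ω x)) := by
  have hq₀ := unitInterval.nonneg (q (coverCount B (Finset.univ.erase i) ω x))
  have hq₁ := unitInterval.one_minus_nonneg (q (coverCount B (Finset.univ.erase i) ω x))
  rw [moveWeight, ENNReal.ofReal_add (by positivity) hq₁, ENNReal.ofReal_mul (by positivity)]
  by_cases hx : x ∈ B (ω i) <;> simp [hx, ENNReal.ofReal_inv_of_pos hp]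

lemma IsBalanced.sum_moveWeight (hq : IsBalanced n p θ q) (hp : 0 < p) (ω : Fin n → E) (x : E) :
    ∑ i, moveWeight B p q i ω x =
      n * (1 + θ) * (cover B Finset.univ ω).indicator (fun _ ↦ 1) x := by
  have hsum := hq.sum_weights_eq hp (Finset.univ.filter fun k ↦ x ∈ B (ω k))
  have hcover : (Finset.univ.filter fun k ↦ x ∈ B (ω k)).Nonempty ↔ x ∈ cover B Finset.univ ω := by
    simp [mem_cover, Finset.filter_nonempty_iff]
  simpa only [moveWeight, coverCount_univ_erase, indicator_apply, hcover, Finset.mem_filter,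
    Finset.mem_univ, true_and] using hsum

end Weights

section Coupling

variable {E : Type*} {n : ℕ}

/-- Given a configuration and `(i, (y, x), t)`, germ `i` is moved to `y` if `t ≤ q N`, where `N` is
the number of other germs covering `x`. -/
def movedConfig (B : E → Set E) (q : ℕ → unitInterval)
    (w : (Fin n → E) × Fin n × (E × E) × unitInterval) : Fin n → E :=
  if w.2.2.2 ≤ q (coverCount B (Finset.univ.erase w.2.1) w.1 w.2.2.1.2) then
    Function.update w.1 w.2.1 w.2.2.1.1
  else w.1

variable [MeasurableSpace E]

/-- The law of the auxiliary randomness of a move: a uniform index, an incident pair and a uniform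
variable in the unit interval. -/
def moveLaw (μ : Measure E) (B : E → Set E) (n : ℕ) : Measure (Fin n × (E × E) × unitInterval) :=
  (uniformOn univ).prod ((incidenceLaw μ B).prod volume)

variable {μ : Measure E} {B : E → Set E} {p θ : ℝ} {q : ℕ → unitInterval}

lemma measurable_movedConfig (hB : MeasurableSet {z : E × E | z.2 ∈ B z.1}) :
    Measurable (movedConfig (n := n) B q) := by
  have hindexed : Measurable fun v : Fin n × (Fin n → E) × (E × E) × unitInterval ↦
      movedConfig B q (v.2.1, v.1, v.2.2) := by
    refine measurable_from_prod_countable_right fun i ↦ .ite (measurableSet_le (by fun_prop) ?_)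
      (measurable_update'.comp (measurable_fst.prodMk (by fun_prop))) measurable_fst
    exact measurable_from_nat.comp
      (measurable_coverCount hB (Finset.univ.erase i) measurable_fst (by fun_prop))
  exact hindexed.comp (f := fun w : (Fin n → E) × Fin n × (E × E) × unitInterval ↦
    (w.2.1, w.1, w.2.2)) (by fun_prop)

lemma lintegral_moveLaw {f : Fin n × (E × E) × unitInterval → ℝ≥0∞} (hf : Measurable f) :
    ∫⁻ w, f w ∂moveLaw μ B n =
      (n : ℝ≥0∞)⁻¹ * ∑ i, ∫⁻ z, (∫⁻ t, f (i, z, t)) ∂incidenceLaw μ B := by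
  rw [moveLaw, lintegral_prod _ hf.aemeasurable, lintegral_uniformOn_univ, Fintype.card_fin]
  refine congrArg _ (Finset.sum_congr rfl fun i _ ↦ ?_)
  exact lintegral_prod _ (hf.comp measurable_prodMk_left).aemeasurable

lemma measurable_moveWeight (hB : MeasurableSet {z : E × E | z.2 ∈ B z.1}) (i : Fin n) :
    Measurable fun v : (Fin n → E) × E ↦ moveWeight B p q i v.1 v.2 := by
  have : Measurable fun v : (Fin n → E) × E ↦
      q (coverCount B (Finset.univ.erase i) v.1 v.2) := measurable_from_nat.comp
    (measurable_coverCount hB (Finset.univ.erase i) measurable_fst measurable_snd)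
  have : Measurable fun v : (Fin n → E) × E ↦ if v.2 ∈ B (v.1 i) then (1 : ℝ) else 0 :=
    .ite (measurableSet_mem_grain hB (by fun_prop) measurable_snd) measurable_const measurable_const
  unfold moveWeight
  fun_prop

lemma sum_lintegral_moveWeight (hB : IsHomogeneousGrain μ B p) (hq : IsBalanced n p θ q)
    (ω : Fin n → E) :
    ∑ i, ∫⁻ x, ENNReal.ofReal (moveWeight B p q i ω x) ∂μ =
      n * (ENNReal.ofReal (1 + θ) * μ (cover B Finset.univ ω)) := by
  have hweight (i : Fin n) : Measurable fun x ↦ moveWeight B p q i ω x :=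
    (measurable_moveWeight hB.measurableSet i).comp measurable_prodMk_left
  have hcover : MeasurableSet (cover B Finset.univ ω) :=
    measurableSet_mem_cover hB.measurableSet _ measurable_const measurable_id
  have hsum (x : E) : ∑ i, ENNReal.ofReal (moveWeight B p q i ω x) =
      (cover B Finset.univ ω).indicator (fun _ ↦ n * ENNReal.ofReal (1 + θ)) x := by
    rw [← ENNReal.ofReal_sum_of_nonneg fun i _ ↦ moveWeight_nonneg hB.pos i ω x,
      hq.sum_moveWeight hB.pos]
    by_cases hx : x ∈ cover B Finset.univ ω <;> simp [hx, ENNReal.ofReal_mul]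
  rw [← lintegral_finsetSum _ fun i _ ↦ (hweight i).ennreal_ofReal, lintegral_congr hsum,
    lintegral_indicator_const hcover, mul_assoc]

variable [IsProbabilityMeasure μ]

lemma isProbabilityMeasure_moveLaw [NeZero n] (hB : IsHomogeneousGrain μ B p) :
    IsProbabilityMeasure (moveLaw μ B n) := by
  have := isProbabilityMeasure_incidenceLaw hB
  have := isProbabilityMeasure_uniformOn (finite_univ (α := Fin n)) univ_nonempty
  unfold moveLaw
  infer_instance

/- Resampling germ `i` together with a point of its grain amounts to choosing a uniform point of the
grain of the original germ. -/
lemma lintegral_update_incidenceLaw (hB : IsHomogeneousGrain μ B p) (i : Fin n)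
    {K : (Fin n → E) × E → ℝ≥0∞} (hK : Measurable K) :
    ∫⁻ ω, ∫⁻ z, K (Function.update ω i z.1, z.2) ∂incidenceLaw μ B ∂(Measure.pi fun _ ↦ μ) =
      ∫⁻ ω, ∫⁻ x, (B (ω i)).indicator (fun _ ↦ (ENNReal.ofReal p)⁻¹) x * K (ω, x) ∂μ
        ∂(Measure.pi fun _ ↦ μ) := by
  have hind : Measurable fun v : (Fin n → E) × E ↦
      (B (v.1 i)).indicator (fun _ ↦ (ENNReal.ofReal p)⁻¹) v.2 :=
    measurable_const.indicator <|
      measurableSet_mem_grain hB.measurableSet (by fun_prop) (by fun_prop)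
  have hsection : Measurable fun ω : Fin n → E ↦
      ∫⁻ x, (B (ω i)).indicator (fun _ ↦ (ENNReal.ofReal p)⁻¹) x * K (ω, x) ∂μ :=
    (hind.mul hK).lintegral_prod_right'
  refine Eq.trans ?_ ((lintegral_prod _ (hsection.comp measurable_update').aemeasurable).symm.trans
    ((measurePreserving_update (fun _ ↦ μ) i).lintegral_comp hsection))
  refine lintegral_congr fun ω ↦ ?_
  have hKω : Measurable fun z : E × E ↦ K (Function.update ω i z.1, z.2) :=
    hK.comp (((measurable_update ω).comp measurable_fst).prodMk measurable_snd)
  rw [lintegral_incidenceLaw hB hKω]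
  simp only [Function.comp_apply, Function.update_self]

lemma lintegral_movedConfig_index (hB : IsHomogeneousGrain μ B p) (i : Fin n)
    {G : (Fin n → E) → ℝ≥0∞} (hG : Measurable G) :
    ∫⁻ ω, ∫⁻ z, (∫⁻ t, G (movedConfig B q (ω, i, z, t))) ∂incidenceLaw μ B
        ∂(Measure.pi fun _ ↦ μ) =
      ∫⁻ ω, (∫⁻ x, ENNReal.ofReal (moveWeight B p q i ω x) ∂μ) * G ω ∂(Measure.pi fun _ ↦ μ) := by
  set a : (Fin n → E) × E → unitInterval := fun v ↦ q (coverCount B (Finset.univ.erase i) v.1 v.2)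
  have ha : Measurable a := measurable_from_nat.comp
    (measurable_coverCount hB.measurableSet (Finset.univ.erase i) measurable_fst measurable_snd)
  have hstay : Measurable fun v : (Fin n → E) × E ↦ ENNReal.ofReal (1 - a v) * G v.1 := by fun_prop
  have hupdate := lintegral_update_incidenceLaw hB i
    (K := fun v ↦ ENNReal.ofReal (a v) * G v.1) (by fun_prop)
  have hinv (ω : Fin n → E) (z : E × E) : a (Function.update ω i z.1, z.2) = a (ω, z.2) :=
    congrArg q (coverCount_erase_update _ _ _ _ _)
  simp only [hinv] at hupdate
  calc
    _ = ∫⁻ ω, ((∫⁻ z, ENNReal.ofReal (a (ω, z.2)) * G (Function.update ω i z.1) ∂incidenceLaw μ B) +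
          ∫⁻ x, ENNReal.ofReal (1 - a (ω, x)) * G ω ∂μ) ∂(Measure.pi fun _ ↦ μ) := by
      refine lintegral_congr fun ω ↦ ?_
      have hstayω : Measurable fun x ↦ ENNReal.ofReal (1 - a (ω, x)) * G ω :=
        hstay.comp measurable_prodMk_left
      rw [← (measurePreserving_snd_incidenceLaw hB).lintegral_comp hstayω]
      refine Eq.trans ?_ (lintegral_add_right _ (hstayω.comp measurable_snd))
      simp only [movedConfig, apply_ite G]
      exact lintegral_congr fun z ↦ lintegral_unitInterval_ite_le _ _ _
    _ = ∫⁻ ω, ∫⁻ x, (B (ω i)).indicator (fun _ ↦ (ENNReal.ofReal p)⁻¹) x *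
            (ENNReal.ofReal (a (ω, x)) * G ω) + ENNReal.ofReal (1 - a (ω, x)) * G ω ∂μ
          ∂(Measure.pi fun _ ↦ μ) := by
      rw [lintegral_add_right _ hstay.lintegral_prod_right', hupdate,
        ← lintegral_add_right _ hstay.lintegral_prod_right']
      exact lintegral_congr fun ω ↦
        (lintegral_add_right _ (hstay.comp measurable_prodMk_left)).symm
    _ = _ := by
      refine lintegral_congr fun ω ↦ ?_
      have hweight : Measurable fun x ↦ moveWeight B p q i ω x :=
        (measurable_moveWeight hB.measurableSet i).comp measurable_prodMk_left
      rw [← lintegral_mul_const _ hweight.ennreal_ofReal]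
      refine lintegral_congr fun x ↦ ?_
      rw [ofReal_moveWeight hB.pos, add_mul, mul_assoc]

lemma lintegral_movedConfig [NeZero n] (hB : IsHomogeneousGrain μ B p) (hq : IsBalanced n p θ q)
    {G : (Fin n → E) → ℝ≥0∞} (hG : Measurable G) :
    ∫⁻ w, G (movedConfig B q w) ∂((Measure.pi fun _ ↦ μ).prod (moveLaw μ B n)) =
      ∫⁻ ω, ENNReal.ofReal (1 + θ) * μ (cover B Finset.univ ω) * G ω ∂(Measure.pi fun _ ↦ μ) := by
  have := isProbabilityMeasure_moveLaw (n := n) hB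
  have hG' : Measurable fun v : (Fin n → E) × Fin n × (E × E) × unitInterval ↦
      G (movedConfig B q v) := hG.comp (measurable_movedConfig hB.measurableSet)
  have hmove (i : Fin n) : Measurable fun ω ↦
      ∫⁻ z, (∫⁻ t, G (movedConfig B q (ω, i, z, t))) ∂incidenceLaw μ B :=
    .lintegral_prod_right <| .lintegral_prod_right <|
      hG'.comp (f := fun v : ((Fin n → E) × E × E) × unitInterval ↦ (v.1.1, i, v.1.2, v.2))
        (by fun_prop)
  have hweight (i : Fin n) : Measurable fun ω ↦
      (∫⁻ x, ENNReal.ofReal (moveWeight B p q i ω x) ∂μ) * G ω :=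
    (measurable_moveWeight hB.measurableSet i).ennreal_ofReal.lintegral_prod_right'.mul hG
  calc
    _ = ∫⁻ ω, (n : ℝ≥0∞)⁻¹ * ∑ i, ∫⁻ z, (∫⁻ t, G (movedConfig B q (ω, i, z, t))) ∂incidenceLaw μ B
          ∂(Measure.pi fun _ ↦ μ) := by
      rw [lintegral_prod _ hG'.aemeasurable]
      exact lintegral_congr fun ω ↦ lintegral_moveLaw (hG'.comp measurable_prodMk_left)
    _ = (n : ℝ≥0∞)⁻¹ * ∑ i, ∫⁻ ω, (∫⁻ x, ENNReal.ofReal (moveWeight B p q i ω x) ∂μ) * G ω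
          ∂(Measure.pi fun _ ↦ μ) := by
      rw [lintegral_const_mul _ (Finset.measurable_fun_sum _ fun i _ ↦ hmove i),
        lintegral_finsetSum _ fun i _ ↦ hmove i]
      exact congrArg _ (Finset.sum_congr rfl fun i _ ↦ lintegral_movedConfig_index hB i hG)
    _ = _ := by
      rw [← lintegral_finsetSum _ fun i _ ↦ hweight i,
        ← lintegral_const_mul _ (Finset.measurable_fun_sum _ fun i _ ↦ hweight i)]
      refine lintegral_congr fun ω ↦ ?_
      rw [← Finset.sum_mul, sum_lintegral_moveWeight hB hq, ← mul_assoc, ← mul_assoc,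
        ENNReal.inv_mul_cancel (by simp [NeZero.ne n]) (by simp), one_mul]

lemma map_movedConfig [NeZero n] (hB : IsHomogeneousGrain μ B p) (hq : IsBalanced n p θ q) :
    ((Measure.pi fun _ ↦ μ).prod (moveLaw μ B n)).map (movedConfig B q) =
      (Measure.pi fun _ ↦ μ).withDensity fun ω ↦
        ENNReal.ofReal (1 + θ) * μ (cover B Finset.univ ω) := by
  have hmeas := measurable_movedConfig (n := n) (q := q) hB.measurableSet
  have hcover := measurable_measure_cover (μ := μ) (ι := Fin n) hB.measurableSet Finset.univ
  refine Measure.ext_of_lintegral _ fun G hG ↦ ?_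
  rw [lintegral_map hG hmeas, lintegral_movedConfig hB hq hG,
    lintegral_withDensity_eq_lintegral_mul _ (hcover.const_mul _) hG]
  rfl

lemma integral_measureReal_cover_mul [NeZero n] (hB : IsHomogeneousGrain μ B p)
    (hq : IsBalanced n p θ q) {h : (Fin n → E) → ℝ} (hh : Measurable h) :
    ∫ ω, μ.real (cover B Finset.univ ω) * h ω ∂(Measure.pi fun _ ↦ μ) =
      (∫ ω, μ.real (cover B Finset.univ ω) ∂(Measure.pi fun _ : Fin n ↦ μ)) *
        ∫ w, h (movedConfig B q w) ∂((Measure.pi fun _ ↦ μ).prod (moveLaw μ B n)) := by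
  have := isProbabilityMeasure_moveLaw (n := n) hB
  refine integral_mul_eq_of_map_eq_withDensity (measurable_movedConfig hB.measurableSet)
    (ENNReal.ofReal_ne_top (r := 1 + θ)) ?_ (fun _ ↦ measureReal_nonneg) ?_ hh
  · exact (measurable_measure_cover hB.measurableSet _).ennreal_toReal
  · simpa only [ofReal_measureReal (measure_ne_top μ _)] using map_movedConfig hB hq

lemma measureReal_cover_update (hB : IsHomogeneousGrain μ B p) (ω : Fin n → E) (i : Fin n) (y : E) :
    μ.real (cover B Finset.univ (Function.update ω i y)) =
      μ.real (cover B (Finset.univ.erase i) ω) + gain μ B (Finset.univ.erase i) ω y := by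
  have hcover : cover B Finset.univ (Function.update ω i y) =
      cover B (Finset.univ.erase i) ω ∪ B y \ cover B (Finset.univ.erase i) ω := by
    ext x
    simp only [union_sdiff_self, mem_union, mem_cover, Finset.mem_erase, Finset.mem_univ, and_true,
      true_and]
    rw [Function.exists_update_iff ω fun _ y ↦ x ∈ B y, or_comm]
  rw [hcover, measureReal_union disjoint_sdiff_right, gain]
  exact (hB.measurableSet_grain y).diff
    (measurableSet_mem_cover hB.measurableSet _ measurable_const measurable_id)

lemma measureReal_cover_movedConfig_sub (hB : IsHomogeneousGrain μ B p) (ω : Fin n → E) (i : Fin n)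
    (z : E × E) (t : unitInterval) :
    μ.real (cover B Finset.univ (movedConfig B q (ω, i, z, t))) - μ.real (cover B Finset.univ ω) =
      if t ≤ q (coverCount B (Finset.univ.erase i) ω z.2) then
        gain μ B (Finset.univ.erase i) ω z.1 - gain μ B (Finset.univ.erase i) ω (ω i)
      else 0 := by
  have hω := measureReal_cover_update hB ω i (ω i)
  rw [Function.update_eq_self] at hω
  simp only [movedConfig]
  split_ifs
  · rw [measureReal_cover_update hB, hω]; ring
  · exact sub_self _

lemma abs_measureReal_cover_movedConfig_sub_le (hB : IsHomogeneousGrain μ B p)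
    (w : (Fin n → E) × Fin n × (E × E) × unitInterval) :
    |μ.real (cover B Finset.univ (movedConfig B q w)) - μ.real (cover B Finset.univ w.1)| ≤ p := by
  obtain ⟨ω, i, z, t⟩ := w
  rw [measureReal_cover_movedConfig_sub hB]
  split_ifs
  · exact abs_gain_sub_gain_le hB _ _ _ _
  · simpa using hB.pos.le

lemma measurable_measureReal_cover_movedConfig_sub (hB : IsHomogeneousGrain μ B p) :
    Measurable fun w : (Fin n → E) × Fin n × (E × E) × unitInterval ↦
      μ.real (cover B Finset.univ (movedConfig B q w)) - μ.real (cover B Finset.univ w.1) := by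
  have hcover := (measurable_measure_cover (μ := μ) (ι := Fin n) hB.measurableSet
    Finset.univ).ennreal_toReal
  exact (hcover.comp (measurable_movedConfig hB.measurableSet)).sub (hcover.comp measurable_fst)

lemma integral_measureReal_cover_movedConfig_sub [NeZero n] (hB : IsHomogeneousGrain μ B p)
    (ω : Fin n → E) :
    ∫ w, (μ.real (cover B Finset.univ (movedConfig B q (ω, w))) - μ.real (cover B Finset.univ ω))
      ∂moveLaw μ B n = drift μ B q ω := by
  have := isProbabilityMeasure_incidenceLaw hB
  have := isProbabilityMeasure_moveLaw (n := n) hB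
  have hchange := measurable_measureReal_cover_movedConfig_sub (n := n) (q := q) hB
  have hint {α : Type _} [MeasurableSpace α] (Q : Measure α) [IsFiniteMeasure Q]
      {f : α → Fin n × (E × E) × unitInterval} (hf : Measurable f) :
      Integrable (fun a ↦ μ.real (cover B Finset.univ (movedConfig B q (ω, f a))) -
        μ.real (cover B Finset.univ ω)) Q :=
    .of_bound (hchange.comp (measurable_prodMk_left.comp hf)).aestronglyMeasurable p
      (ae_of_all _ fun a ↦ abs_measureReal_cover_movedConfig_sub_le hB (ω, f a))
  rw [moveLaw, integral_prod _ (hint (f := fun w ↦ w) _ measurable_id), integral_uniformOn_univ,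
    drift, Fintype.card_fin]
  refine congrArg _ (Finset.sum_congr rfl fun i _ ↦ ?_)
  rw [integral_prod _ (hint _ measurable_prodMk_left), moveEffect]
  refine integral_congr_ae (ae_of_all _ fun z ↦ ?_)
  simp only [measureReal_cover_movedConfig_sub hB]
  exact integral_unitInterval_ite_le _ _

lemma variance_condExp_cover_movedConfig_sub_le [NeZero n] (hB : IsHomogeneousGrain μ B p) (c : ℝ)
    {m : MeasurableSpace ((Fin n → E) × Fin n × (E × E) × unitInterval)}
    (hm : m ≤ MeasurableSpace.comap Prod.fst inferInstance) :
    Var[((Measure.pi fun _ ↦ μ).prod (moveLaw μ B n))[fun w ↦ c *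
        (μ.real (cover B Finset.univ (movedConfig B q w)) - μ.real (cover B Finset.univ w.1)) | m];
        (Measure.pi fun _ ↦ μ).prod (moveLaw μ B n)] ≤
      c ^ 2 * ((n : ℝ)⁻¹ * (2 * (p + 2 * n * p ^ 2) ^ 2 + 2 * (n * p ^ 3 + n ^ 2 * p ^ 4))) := by
  have := isProbabilityMeasure_moveLaw (n := n) hB
  have hchange := measurable_measureReal_cover_movedConfig_sub (n := n) (q := q) hB
  have hL2 : MemLp (fun w ↦ c * (μ.real (cover B Finset.univ (movedConfig B q w)) -
      μ.real (cover B Finset.univ w.1))) 2 ((Measure.pi fun _ ↦ μ).prod (moveLaw μ B n)) :=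
    (MemLp.of_bound hchange.aestronglyMeasurable p
      (ae_of_all _ (abs_measureReal_cover_movedConfig_sub_le hB))).const_mul c
  refine (variance_condExp_prod_le hm hL2).trans ?_
  simp only [integral_const_mul, integral_measureReal_cover_movedConfig_sub hB]
  rw [variance_const_mul]
  gcongr
  exact variance_drift_le hB

theorem exists_size_bias_coupling_cover.{u} {E : Type u} [MeasurableSpace E] {μ : Measure E}
    [IsProbabilityMeasure μ] {B : E → Set E} [NeZero n] (hB : IsHomogeneousGrain μ B p) (hp : p ≤ 1)
    {c : ℝ} (hc : 0 ≤ c) {V : (Fin n → E) → ℝ}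
    (hV : ∀ ω, V ω = c * μ.real (cover B Finset.univ ω)) :
    ∃ (Ω : Type u) (_ : MeasurableSpace Ω) (Q : Measure Ω) (_ : IsProbabilityMeasure Q)
      (X X' : Ω → ℝ),
      Measurable X ∧ Measurable X' ∧
      Q.map X = (Measure.pi fun _ ↦ μ).map V ∧
      (∀ g : ℝ → ℝ, Measurable g →
        ∫ w, X w * g (X w) ∂Q = (∫ w, X w ∂Q) * ∫ w, g (X' w) ∂Q) ∧
      (∀ w, |X' w - X w| ≤ c * p) ∧
      Var[Q[fun w ↦ X' w - X w | MeasurableSpace.comap X Real.measurableSpace]; Q] ≤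
        c ^ 2 * ((n : ℝ)⁻¹ * (2 * (p + 2 * n * p ^ 2) ^ 2 + 2 * (n * p ^ 3 + n ^ 2 * p ^ 4))) := by
  obtain ⟨θ, q, hq⟩ := exists_isBalanced (Nat.pos_of_neZero n) hB.pos hp
  have := isProbabilityMeasure_moveLaw (n := n) hB
  have hfst := measurePreserving_fst (μ := Measure.pi fun _ : Fin n ↦ μ) (ν := moveLaw μ B n)
  have hVmeas : Measurable V := funext hV ▸
    (measurable_measure_cover hB.measurableSet Finset.univ).ennreal_toReal.const_mul c
  refine ⟨(Fin n → E) × Fin n × (E × E) × unitInterval, inferInstance,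
    (Measure.pi fun _ ↦ μ).prod (moveLaw μ B n), inferInstance, V ∘ Prod.fst, V ∘ movedConfig B q,
    hVmeas.comp measurable_fst, hVmeas.comp (measurable_movedConfig hB.measurableSet), ?_,
    fun g hg ↦ ?_, fun w ↦ ?_, ?_⟩
  · rw [← Measure.map_map hVmeas measurable_fst, hfst.map_eq]
  · have hbias := integral_measureReal_cover_mul hB hq (hg.comp hVmeas)
    have hVg : Measurable fun ω ↦ V ω * g (V ω) := hVmeas.mul (hg.comp hVmeas)
    simp only [Function.comp_apply]
    rw [integral_comp_measurePreserving hfst hVg.aestronglyMeasurable,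
      integral_comp_measurePreserving hfst hVmeas.aestronglyMeasurable]
    simp only [Function.comp_apply] at hbias
    simp only [funext hV, mul_assoc, integral_const_mul] at hbias ⊢
    rw [hbias]
  · simp only [Function.comp_apply, hV, ← mul_sub, abs_mul, abs_of_nonneg hc]
    exact mul_le_mul_of_nonneg_left (abs_measureReal_cover_movedConfig_sub_le hB w) hc
  · simp only [Function.comp_apply, hV, ← mul_sub]
    refine variance_condExp_cover_movedConfig_sub_le hB c ?_
    rw [← MeasurableSpace.comap_comp]
    exact MeasurableSpace.comap_mono hVmeas.comap_le

end Coupling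

section UniformBox

variable {d : ℕ} {L : ℝ}

/-- The germ–grain model of toroidal balls of radius `r`; unlike in `torBall`, the grain is not cut
off to the box, so that it is its own reflected grain. -/
def torGrain (L r : ℝ) (x : Fin d → ℝ) : Set (Fin d → ℝ) := {y | torDist L x y ≤ r}

lemma measurableSet_box : MeasurableSet (box d L) := .univ_pi fun _ ↦ measurableSet_Ico

lemma torGrain_inter_box (r : ℝ) (x : Fin d → ℝ) : torGrain L r x ∩ box d L = torBall L x r := by
  ext y
  exact and_comm

lemma uniformBox_real_apply (hL : 0 ≤ L) (s : Set (Fin d → ℝ)) :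
    (uniformBox d L).real s = volume.real (s ∩ box d L) / L ^ d := by
  rw [uniformBox, measureReal_nnreal_smul_apply, measureReal_restrict_apply' measurableSet_box]
  simp [hL, div_eq_inv_mul]

lemma isProbabilityMeasure_uniformBox (hL : 0 < L) : IsProbabilityMeasure (uniformBox d L) := by
  rw [isProbabilityMeasure_iff_real, uniformBox_real_apply hL.le, univ_inter, measureReal_def,
    volume_box hL.le, ENNReal.toReal_ofReal (by positivity), div_self (by positivity)]

lemma isHomogeneousGrain_torGrain [Fact (0 < L)] {r : ℝ} (hr : 0 < r) :
    IsHomogeneousGrain (uniformBox d L) (torGrain L r) (volume.real (torusBall d L r) / L ^ d) := by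
  have hL : 0 < L := Fact.out
  have := isProbabilityMeasure_uniformBox (d := d) hL
  have hfin : volume (torusBall d L r) ≠ ∞ :=
    ne_top_of_le_ne_top ENNReal.ofReal_ne_top (volume_torusBall_le hr.le)
  have hgrain (x : Fin d → ℝ) : uniformBox d L (torGrain L r x) =
      ENNReal.ofReal (volume.real (torusBall d L r) / L ^ d) := by
    rw [← ofReal_measureReal, uniformBox_real_apply hL.le, torGrain_inter_box, measureReal_def,
      volume_torBall, measureReal_def]
  refine ⟨measurableSet_le measurable_torDist measurable_const, ?_, hgrain, fun x ↦ ?_⟩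
  · have := ENNReal.toReal_pos (volume_torusBall_pos hr).ne' hfin
    rw [measureReal_def]
    positivity
  · rw [← hgrain x]
    simp only [torGrain, mem_ofPred_eq, torDist_comm hL x]

end UniformBox

section CoveredVolume

variable {d n : ℕ} {ρ : ℝ}

lemma sideLen_pos (hn : 1 ≤ n) : 0 < sideLen d n :=
  Real.rpow_pos_of_pos (by exact_mod_cast hn) _

lemma sideLen_pow (hd : 1 ≤ d) : sideLen d n ^ d = n :=
  Real.rpow_inv_natCast_pow n.cast_nonneg (by lia)

lemma coveredVol_eq (hd : 1 ≤ d) (hn : 1 ≤ n) (ω : Fin n → Fin d → ℝ) :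
    coveredVol d n ρ ω = n * (uniformBox d (sideLen d n)).real
      (cover (torGrain (sideLen d n) ρ) Finset.univ ω) := by
  have hn' : (n : ℝ) ≠ 0 := by positivity
  rw [uniformBox_real_apply (sideLen_pos hn).le, sideLen_pow hd, mul_div_cancel₀ _ hn', cover]
  simp only [Finset.mem_univ, iUnion_true, iUnion_inter, torGrain_inter_box]
  rfl

lemma phi_nonneg (hρ : 0 ≤ ρ) : 0 ≤ phi d ρ := mul_nonneg ENNReal.toReal_nonneg (pow_nonneg hρ d)

theorem coveredVol_size_bias_coupling_general
    (d n : ℕ) (hd : 1 ≤ d) (hn : 1 ≤ n) (ρ : ℝ) (hρ : 0 < ρ) :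
    ∃ (Ω : Type) (_ : MeasurableSpace Ω) (Q : Measure Ω) (_ : IsProbabilityMeasure Q)
      (X X' : Ω → ℝ),
      Measurable X ∧ Measurable X' ∧
      Measure.map X Q = Measure.map (coveredVol d n ρ) (binppLaw d n) ∧
      (∀ g : ℝ → ℝ, Continuous g → (∃ C, ∀ x, |g x| ≤ C) →
        ∫ ω, X ω * g (X ω) ∂Q = (∫ ω, X ω ∂Q) * ∫ ω, g (X' ω) ∂Q) ∧
      (∀ᵐ ω ∂Q, |X' ω - X ω| ≤ phi d ρ) ∧
      variance (Q[fun ω => X' ω - X ω|MeasurableSpace.comap X Real.measurableSpace]) Q ≤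
        (2 * phi d ρ ^ 2 + 10 * phi d ρ ^ 3 + 10 * phi d ρ ^ 4) / n := by
  have : NeZero n := ⟨by lia⟩
  have : Fact (0 < sideLen d n) := ⟨sideLen_pos hn⟩
  have hL : 0 < sideLen d n := Fact.out
  have : IsProbabilityMeasure (uniformBox d (sideLen d n)) := isProbabilityMeasure_uniformBox hL
  have hB := isHomogeneousGrain_torGrain (d := d) (L := sideLen d n) hρ
  have hp : volume.real (torusBall d (sideLen d n) ρ) / sideLen d n ^ d ≤ 1 :=
    hB.measureReal_grain 0 ▸ measureReal_le_one
  have hψ : volume.real (torusBall d (sideLen d n) ρ) ≤ phi d ρ :=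
    ENNReal.toReal_le_of_le_ofReal (phi_nonneg hρ.le) (volume_torusBall_le hρ.le)
  have hψ₀ : 0 ≤ volume.real (torusBall d (sideLen d n) ρ) := measureReal_nonneg
  have hn' : (n : ℝ) ≠ 0 := NeZero.ne _
  obtain ⟨Ω, mΩ, Q, hQ, X, X', hX, hX', hlaw, hbias, hbdd, hvar⟩ :=
    exists_size_bias_coupling_cover hB hp n.cast_nonneg (coveredVol_eq hd hn)
  rw [sideLen_pow hd] at hbdd hvar
  refine ⟨Ω, mΩ, Q, hQ, X, X', hX, hX', hlaw, fun g hg _ ↦ hbias g hg.measurable,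
    ae_of_all _ fun w ↦ (hbdd w).trans ?_, hvar.trans ?_⟩
  · rwa [mul_div_cancel₀ _ hn']
  · generalize volume.real (torusBall d (sideLen d n) ρ) = ψ at hψ hψ₀
    calc _ = (2 * ψ ^ 2 + 10 * ψ ^ 3 + 10 * ψ ^ 4) / n := by field_simp; ring
      _ ≤ _ := by gcongr

lemma le_etaV (hd : 1 ≤ d) (hρ : 0 ≤ ρ) (hphi : 6 ^ d * phi d ρ < n) :
    2 * phi d ρ ^ 2 + 10 * phi d ρ ^ 3 + 10 * phi d ρ ^ 4 ≤ etaV d n ρ := by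
  have hφ : 0 ≤ phi d ρ := phi_nonneg hρ
  have h3 : (3 : ℝ) ≤ 3 ^ d := le_self_pow₀ (by norm_num) (by lia)
  have h6 : (6 : ℝ) ≤ 6 ^ d := le_self_pow₀ (by norm_num) (by lia)
  have h2 : (2 : ℝ) ≤ 2 ^ d := le_self_pow₀ (by norm_num) (by lia)
  have h36 : 3 * 2 ^ d * phi d ρ ≤ 6 ^ d * phi d ρ := by
    rw [show (6 : ℝ) ^ d = 3 ^ d * 2 ^ d by rw [← mul_pow]; norm_num]
    gcongr
  have : (0 : ℝ) ≤ n := n.cast_nonneg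
  have hfrac₁ : 0 ≤ (2 * n - 6 ^ d * phi d ρ) / (n - 6 ^ d * phi d ρ) :=
    div_nonneg (by linarith) (by linarith)
  have hfrac₂ : 0 ≤ (2 * n - 3 * 2 ^ d * phi d ρ) / (n - 3 * 2 ^ d * phi d ρ) :=
    div_nonneg (by linarith) (by linarith)
  rw [etaV]
  generalize (2 * n - 6 ^ d * phi d ρ) / (n - 6 ^ d * phi d ρ) = a at hfrac₁ ⊢
  generalize (2 * n - 3 * 2 ^ d * phi d ρ) / (n - 3 * 2 ^ d * phi d ρ) = b at hfrac₂ ⊢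
  generalize phi d ρ = φ at hφ ⊢
  calc 2 * φ ^ 2 + 10 * φ ^ 3 + 10 * φ ^ 4
      ≤ 2 * φ ^ 2 * ((3 + 1) * φ + 1) ^ 2 * (1 + (2 + 1) * 6 * φ + 0) + 0 := by
        have : 0 ≤ 42 * φ ^ 3 + 310 * φ ^ 4 + 576 * φ ^ 5 := by positivity
        linarith
    _ ≤ _ := by gcongr <;> positivity

end CoveredVolume

/-- Proposition 5.1 together with the coupling of Section 4: there is a bounded
size-biased coupling `(V, V')` for the covered volume with
`Var(E[V' - V | V]) ≤ η_V(n,ρ)/n`. -/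
theorem coveredVol_size_bias_coupling
    (d n : ℕ) (hd : 1 ≤ d) (hn : 4 ≤ n) (ρ : ℝ) (hρ : 0 < ρ)
    (hphi : 6 ^ d * phi d ρ < n) :
    ∃ (Ω : Type) (_ : MeasurableSpace Ω) (Q : Measure Ω) (_ : IsProbabilityMeasure Q)
      (X X' : Ω → ℝ),
      Measurable X ∧ Measurable X' ∧
      Measure.map X Q = Measure.map (coveredVol d n ρ) (binppLaw d n) ∧
      (∀ g : ℝ → ℝ, Continuous g → (∃ C, ∀ x, |g x| ≤ C) →
        ∫ ω, X ω * g (X ω) ∂Q = (∫ ω, X ω ∂Q) * ∫ ω, g (X' ω) ∂Q) ∧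
      (∀ᵐ ω ∂Q, |X' ω - X ω| ≤ phi d ρ) ∧
      variance (Q[fun ω => X' ω - X ω|MeasurableSpace.comap X Real.measurableSpace]) Q ≤
        etaV d n ρ / n := by
  obtain ⟨Ω, mΩ, Q, hQ, X, X', hX, hX', hlaw, hbias, hbdd, hvar⟩ :=
    coveredVol_size_bias_coupling_general d n hd (by lia) ρ hρ
  refine ⟨Ω, mΩ, Q, hQ, X, X', hX, hX', hlaw, hbias, hbdd, hvar.trans ?_⟩
  gcongr
  exact le_etaV hd hρ.le hphi

end
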